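/- arXiv:2509.12986 — 3 statements merged into one kernel-verified Lean document; each statement's English description precedes it below -/
import Mathlib

section
/- (Deviation bound, diagonal case.) There is an absolute constant C > 0 with the following property: for all integers θ > 0 and θ₀ with 0 < θ₀ ≤ √d, all dimensions d with d > √6·(2θ₀)^{7/4}, every φ ∈ (0,1], every CPTP map Φ on M_d(ℂ) given with a Kraus representation of r operators and satisfying F_e(Φ) ≤ φ², every s ∈ {1,…,d}, and every ε > 0, μ{ U ∈ U(d) : X_{ss}(U) ≥ ε } ≤ C · e^{−θ·ε} · ( exp( r·θ·(φ²·d + 2θ₀)²/(d²·φ²) ) + e^{θ} · ( √r·(φ²·d + 2θ₀)/(φ·d) )^{2θ₀} ). -/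
open MeasureTheory Matrix

noncomputable section

instance matrixMeasurableSpace {m n α : Type*} [MeasurableSpace α] :
    MeasurableSpace (Matrix m n α) :=
  inferInstanceAs (MeasurableSpace (m → n → α))

/-- `X_{st}(U) = ∑_i |⟨e_t, U* K_i U e_s⟩|²`. -/
def Xst {d r : ℕ} (K : Fin r → Matrix (Fin d) (Fin d) ℂ) (s t : Fin d)
    (U : Matrix.unitaryGroup (Fin d) ℂ) : ℝ :=
  ∑ i, ‖(star (U : Matrix (Fin d) (Fin d) ℂ) * K i * (U : Matrix (Fin d) (Fin d) ℂ)) t s‖ ^ 2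

section Moments

open scoped Matrix.Norms.L2Operator

variable {d : ℕ}

/-- The vector state `M ↦ ⟨U e_s, M U e_s⟩`. -/
def columnState (s : Fin d) (U : unitaryGroup (Fin d) ℂ) :
    Matrix (Fin d) (Fin d) ℂ →ₗ[ℂ] ℂ where
  toFun M := (star (U : Matrix (Fin d) (Fin d) ℂ) * M * (U : Matrix (Fin d) (Fin d) ℂ)) s s
  map_add' M N := by simp [mul_add, add_mul]
  map_smul' c M := by simp

lemma columnState_apply (s : Fin d) (U : unitaryGroup (Fin d) ℂ)
    (M : Matrix (Fin d) (Fin d) ℂ) :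
    columnState s U M =
      (star (U : Matrix (Fin d) (Fin d) ℂ) * M * (U : Matrix (Fin d) (Fin d) ℂ)) s s := rfl

lemma columnState_eq_sum (s : Fin d) (U : unitaryGroup (Fin d) ℂ)
    (M : Matrix (Fin d) (Fin d) ℂ) :
    columnState s U M =
      ∑ b, (∑ a, star ((U : Matrix (Fin d) (Fin d) ℂ) a s) * M a b) *
        (U : Matrix (Fin d) (Fin d) ℂ) b s := by
  simp [columnState_apply, mul_apply, star_apply]

lemma columnState_one (s : Fin d) (U : unitaryGroup (Fin d) ℂ) : columnState s U 1 = 1 := by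
  simp [columnState_apply]

lemma columnState_mul_left (s : Fin d) (g U : unitaryGroup (Fin d) ℂ)
    (M : Matrix (Fin d) (Fin d) ℂ) :
    columnState s (g * U) M =
      columnState s U (star (g : Matrix (Fin d) (Fin d) ℂ) * M * g) := by
  simp [columnState_apply, mul_assoc]

lemma columnState_conjTranspose (s : Fin d) (U : unitaryGroup (Fin d) ℂ)
    (M : Matrix (Fin d) (Fin d) ℂ) :
    columnState s U Mᴴ = star (columnState s U M) := by
  rw [columnState_apply, columnState_apply, ← conjTranspose_apply]
  simp only [star_eq_conjTranspose, conjTranspose_mul, conjTranspose_conjTranspose, mul_assoc]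

lemma norm_entry_le_l2_opNorm (M : Matrix (Fin d) (Fin d) ℂ) (i j : Fin d) : ‖M i j‖ ≤ ‖M‖ := by
  have h := l2_opNorm_mulVec M (EuclideanSpace.single j 1)
  simp only [PiLp.norm_single, norm_one, mul_one] at h
  refine le_trans ?_ h
  have := PiLp.norm_apply_le (WithLp.toLp 2 (M *ᵥ (EuclideanSpace.single j (1 : ℂ)))) i
  simpa using this

lemma norm_columnState_le (s : Fin d) (U : unitaryGroup (Fin d) ℂ)
    (M : Matrix (Fin d) (Fin d) ℂ) : ‖columnState s U M‖ ≤ ‖M‖ := by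
  rw [columnState_apply]
  refine (norm_entry_le_l2_opNorm _ s s).trans ?_
  rw [CStarRing.norm_mul_mem_unitary _ U.2,
    CStarRing.norm_mem_unitary_mul _ (Unitary.star_mem U.2)]

lemma norm_trace_le (M : Matrix (Fin d) (Fin d) ℂ) : ‖M.trace‖ ≤ d * ‖M‖ := by
  refine (norm_sum_le _ _).trans ?_
  refine (Finset.sum_le_sum fun i _ => norm_entry_le_l2_opNorm M i i).trans ?_
  simp

lemma columnState_mul_single (s : Fin d) (U : unitaryGroup (Fin d) ℂ)
    (A : Matrix (Fin d) (Fin d) ℂ) (a b : Fin d) : columnState s U (A * single a b 1) =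
      (∑ c, star ((U : Matrix (Fin d) (Fin d) ℂ) c s) * A c a) *
        (U : Matrix (Fin d) (Fin d) ℂ) b s := by
  rw [columnState_eq_sum, Finset.sum_eq_single b]
  · simp
  · intro c _ hc
    simp [mul_single_apply_of_ne, hc]
  · simp

lemma sum_columnState_mul_single_mul (s : Fin d) (U : unitaryGroup (Fin d) ℂ)
    (A B : Matrix (Fin d) (Fin d) ℂ) :
    ∑ a, ∑ b, columnState s U (A * single a b 1) * columnState s U (B * single b a 1) =
      columnState s U A * columnState s U B := by
  simp only [columnState_mul_single]
  rw [columnState_eq_sum, columnState_eq_sum, Finset.sum_mul_sum]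
  refine Finset.sum_congr rfl fun a _ => Finset.sum_congr rfl fun b _ => ?_
  ring

lemma sum_columnState_mul_single_mul_single_mul (s : Fin d) (U : unitaryGroup (Fin d) ℂ)
    (A B : Matrix (Fin d) (Fin d) ℂ) :
    ∑ a, ∑ b, columnState s U (A * single a b 1) * columnState s U (single b a 1 * B) =
      columnState s U (A * B) := by
  have hU : ∑ b, star ((U : Matrix (Fin d) (Fin d) ℂ) b s) *
      (U : Matrix (Fin d) (Fin d) ℂ) b s = 1 := by
    have := columnState_one s U
    simpa [columnState_apply, mul_apply, star_apply] using this
  have h (a b : Fin d) : columnState s U (single b a 1 * B) =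
      star ((U : Matrix (Fin d) (Fin d) ℂ) b s) *
        ∑ c, B a c * (U : Matrix (Fin d) (Fin d) ℂ) c s := by
    rw [columnState_eq_sum, Finset.mul_sum]
    refine Finset.sum_congr rfl fun c _ => ?_
    rw [Finset.sum_eq_single b]
    · simp [mul_assoc]
    · intro e _ he
      simp [single_mul_apply_of_ne, he]
    · simp
  simp only [columnState_mul_single, h]
  calc _ = ∑ a, ((∑ c, star ((U : Matrix (Fin d) (Fin d) ℂ) c s) * A c a) *
        ∑ c, B a c * (U : Matrix (Fin d) (Fin d) ℂ) c s) *
        ∑ b, star ((U : Matrix (Fin d) (Fin d) ℂ) b s) *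
          (U : Matrix (Fin d) (Fin d) ℂ) b s := by
        refine Finset.sum_congr rfl fun a _ => ?_
        rw [Finset.mul_sum]
        refine Finset.sum_congr rfl fun b _ => ?_
        ring
    _ = ∑ a, (star (U : Matrix (Fin d) (Fin d) ℂ) * A) s a *
        (B * (U : Matrix (Fin d) (Fin d) ℂ)) a s := by
        simp only [hU, mul_one, mul_apply, star_apply]
    _ = _ := by
        rw [columnState_apply, ← mul_apply]
        simp only [mul_assoc]

lemma sum_mul_single_mul_single (A : Matrix (Fin d) (Fin d) ℂ) :
    ∑ a, ∑ b, A * single a b 1 * single b a 1 = (d : ℂ) • A := by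
  simp only [mul_assoc, single_mul_single_same, mul_one, ← Finset.mul_sum, Finset.sum_const]
  rw [← Finset.smul_sum, sum_single_one]
  simpa [Nat.cast_smul_eq_nsmul ℂ] using (Nat.cast_comm d A).symm

lemma sum_single_mul_mul_single (A : Matrix (Fin d) (Fin d) ℂ) :
    ∑ a, ∑ b, single b a 1 * (A * single a b 1) = A.trace • (1 : Matrix (Fin d) (Fin d) ℂ) := by
  have h (a b : Fin d) : single b a 1 * (A * single a b 1) = A a a • single b b (1 : ℂ) := by
    rw [← mul_assoc, single_mul_mul_single]
    simp
  simp only [h, ← Finset.smul_sum, sum_single_one, ← Finset.sum_smul]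
  rfl

lemma measurable_unitaryGroup_entry (a b : Fin d) :
    Measurable fun U : unitaryGroup (Fin d) ℂ => (U : Matrix (Fin d) (Fin d) ℂ) a b :=
  (measurable_pi_apply b).comp ((measurable_pi_apply a).comp measurable_subtype_coe)

instance unitaryGroup_measurableMul : MeasurableMul (unitaryGroup (Fin d) ℂ) where
  measurable_const_mul g := by
    refine Measurable.subtype_mk ?_
    refine measurable_pi_lambda _ fun i => measurable_pi_lambda _ fun j => ?_
    simp only [mul_apply]
    exact Finset.measurable_sum _ fun k _ => (measurable_unitaryGroup_entry k j).const_mul _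
  measurable_mul_const g := by
    refine Measurable.subtype_mk ?_
    refine measurable_pi_lambda _ fun i => measurable_pi_lambda _ fun j => ?_
    simp only [mul_apply]
    exact Finset.measurable_sum _ fun k _ => (measurable_unitaryGroup_entry i k).mul_const _

lemma measurable_columnState (s : Fin d) (M : Matrix (Fin d) (Fin d) ℂ) :
    Measurable fun U => columnState s U M := by
  simp only [columnState_eq_sum]
  refine Finset.measurable_sum _ fun b _ => (Finset.measurable_sum _ fun a _ => ?_).mul
    (measurable_unitaryGroup_entry b s)
  exact ((continuous_star.measurable).comp (measurable_unitaryGroup_entry a s)).mul_const _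

variable (μ : Measure (unitaryGroup (Fin d) ℂ)) [IsProbabilityMeasure μ]

lemma norm_prod_columnState_le {n : ℕ} (s : Fin d) (M : Fin n → Matrix (Fin d) (Fin d) ℂ)
    (U : unitaryGroup (Fin d) ℂ) : ‖∏ j, columnState s U (M j)‖ ≤ ∏ j, ‖M j‖ := by
  rw [norm_prod]
  exact Finset.prod_le_prod (fun _ _ => norm_nonneg _) fun j _ => norm_columnState_le s U (M j)

lemma integrable_prod_columnState {n : ℕ} (s : Fin d) (M : Fin n → Matrix (Fin d) (Fin d) ℂ) :
    Integrable (fun U => ∏ j, columnState s U (M j)) μ :=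
  .of_bound (Finset.measurable_prod _ fun j _ =>
    measurable_columnState s (M j)).aestronglyMeasurable (∏ j, ‖M j‖)
    (.of_forall fun U => norm_prod_columnState_le s M U)

/-- The mixed moment `∫ ∏ⱼ ⟨U e_s, M_j U e_s⟩ dμ(U)`, as a multilinear map in the matrices. -/
def mixedMoment (s : Fin d) (n : ℕ) :
    ContinuousMultilinearMap ℂ (fun _ : Fin n => Matrix (Fin d) (Fin d) ℂ) ℂ :=
  MultilinearMap.mkContinuous
    { toFun := fun M => ∫ U, ∏ j, columnState s U (M j) ∂μ
      map_update_add' := by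
        intro _ M i x y
        rw [← integral_add (integrable_prod_columnState μ s _)
          (integrable_prod_columnState μ s _)]
        congr 1 with U
        have := ((MultilinearMap.mkPiAlgebra ℂ (Fin n) ℂ).compLinearMap
          fun _ => columnState s U).map_update_add M i x y
        simp only [MultilinearMap.compLinearMap_apply, MultilinearMap.mkPiAlgebra_apply] at this
        convert this
      map_update_smul' := by
        intro _ M i c x
        rw [← integral_smul]
        congr 1 with U
        have := ((MultilinearMap.mkPiAlgebra ℂ (Fin n) ℂ).compLinearMap
          fun _ => columnState s U).map_update_smul M i c x
        simp only [MultilinearMap.compLinearMap_apply, MultilinearMap.mkPiAlgebra_apply] at this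
        convert this } 1 fun M => by
    rw [one_mul]
    simpa using norm_integral_le_of_norm_le_const (μ := μ)
      (.of_forall fun U => norm_prod_columnState_le s M U)

lemma mixedMoment_apply (s : Fin d) {n : ℕ} (M : Fin n → Matrix (Fin d) (Fin d) ℂ) :
    mixedMoment μ s n M = ∫ U, ∏ j, columnState s U (M j) ∂μ := rfl

lemma prod_columnState_update (s : Fin d) (U : unitaryGroup (Fin d) ℂ) {n : ℕ}
    (M : Fin n → Matrix (Fin d) (Fin d) ℂ) (j : Fin n) (X : Matrix (Fin d) (Fin d) ℂ) :
    ∏ i, columnState s U (Function.update M j X i) =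
      columnState s U X * ∏ i ∈ Finset.univ \ {j}, columnState s U (M i) := by
  rw [← Finset.prod_update_of_mem (Finset.mem_univ j)]
  refine Finset.prod_congr rfl fun i _ => ?_
  exact Function.apply_update (fun _ => columnState s U) M j X i

lemma sum_mixedMoment_cons_mul_single (s : Fin d) {n : ℕ} (A : Matrix (Fin d) (Fin d) ℂ)
    (M : Fin n → Matrix (Fin d) (Fin d) ℂ) (j : Fin n) :
    ∑ a, ∑ b, mixedMoment μ s (n + 1) (Fin.cons (A * single a b 1)
      (Function.update M j (M j * single b a 1 - single b a 1 * M j))) =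
      mixedMoment μ s (n + 1) (Fin.cons A M) -
        mixedMoment μ s n (Function.update M j (A * M j)) := by
  simp only [mixedMoment_apply]
  rw [← integral_sub (integrable_prod_columnState μ s _) (integrable_prod_columnState μ s _)]
  simp only [← integral_finsetSum _ fun _ _ => integrable_prod_columnState μ s _]
  rw [← integral_finsetSum _ fun _ _ => integrable_finsetSum _ fun _ _ =>
    integrable_prod_columnState μ s _]
  congr 1 with U
  have hM : ∏ i, columnState s U (M i) =
      columnState s U (M j) * ∏ i ∈ Finset.univ \ {j}, columnState s U (M i) := by
    simpa using prod_columnState_update s U M j (M j)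
  simp only [Fin.prod_univ_succ, Fin.cons_zero, Fin.cons_succ, prod_columnState_update, hM,
    map_sub]
  rw [← sum_columnState_mul_single_mul_single_mul, ← mul_assoc,
    ← sum_columnState_mul_single_mul, ← sub_mul, ← Finset.sum_sub_distrib, Finset.sum_mul]
  refine Finset.sum_congr rfl fun a _ => ?_
  rw [← Finset.sum_sub_distrib, Finset.sum_mul]
  refine Finset.sum_congr rfl fun b _ => ?_
  ring

variable [μ.IsMulLeftInvariant]

lemma mixedMoment_conj (s : Fin d) {n : ℕ} (M : Fin n → Matrix (Fin d) (Fin d) ℂ)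
    (g : unitaryGroup (Fin d) ℂ) :
    mixedMoment μ s n (fun j => star (g : Matrix (Fin d) (Fin d) ℂ) * M j * g) =
      mixedMoment μ s n M := by
  simp only [mixedMoment_apply, ← columnState_mul_left]
  exact integral_mul_left_eq_self (fun U => ∏ j, columnState s U (M j)) g

lemma sum_mixedMoment_commutator_of_skewAdjoint (s : Fin d) {n : ℕ}
    (M : Fin n → Matrix (Fin d) (Fin d) ℂ) {N : Matrix (Fin d) (Fin d) ℂ}
    (hN : N ∈ skewAdjoint (Matrix (Fin d) (Fin d) ℂ)) :
    ∑ j, mixedMoment μ s n (Function.update M j (M j * N - N * M j)) = 0 := by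
  let _ : NormedAlgebra ℚ (Matrix (Fin d) (Fin d) ℂ) := .restrictScalars ℚ ℂ _
  have hcurve (A : Matrix (Fin d) (Fin d) ℂ) : HasDerivAt
      (fun t : ℝ => star (NormedSpace.exp (t • N)) * A * NormedSpace.exp (t • N))
      (A * N - N * A) 0 := by
    have h₁ := hasDerivAt_exp_smul_const (𝕂 := ℝ) N 0
    have h₂ := (h₁.star.mul_const A).mul h₁
    have hs : star N = -N := hN
    refine h₂.congr_deriv ?_
    simp [hs]
    abel
  have hpi : HasDerivAt (fun (t : ℝ) (j : Fin n) =>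
      star (NormedSpace.exp (t • N)) * M j * NormedSpace.exp (t • N))
      (fun j => M j * N - N * M j) 0 := hasDerivAt_pi.2 fun j => hcurve (M j)
  have hM : (fun j : Fin n => star (NormedSpace.exp ((0 : ℝ) • N)) * M j *
      NormedSpace.exp ((0 : ℝ) • N)) = M := by simp
  have hΛ := ((mixedMoment μ s n).hasFDerivAt M).restrictScalars ℝ
  have hcomp := HasFDerivAt.comp_hasDerivAt_of_eq (0 : ℝ) hΛ hpi hM.symm
  have hconst : (mixedMoment μ s n ∘ fun (t : ℝ) (j : Fin n) =>
      star (NormedSpace.exp (t • N)) * M j * NormedSpace.exp (t • N)) =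
      fun _ => mixedMoment μ s n M := by
    ext t
    exact mixedMoment_conj μ s M ⟨NormedSpace.exp (t • N),
      NormedSpace.exp_mem_unitary_of_mem_skewAdjoint (skewAdjoint.smul_mem t hN)⟩
  rw [hconst] at hcomp
  have := hcomp.unique (hasDerivAt_const (0 : ℝ) (mixedMoment μ s n M))
  simpa using this

lemma sum_mixedMoment_commutator (s : Fin d) {n : ℕ}
    (M : Fin n → Matrix (Fin d) (Fin d) ℂ) (N : Matrix (Fin d) (Fin d) ℂ) :
    ∑ j, mixedMoment μ s n (Function.update M j (M j * N - N * M j)) = 0 := by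
  let D : Matrix (Fin d) (Fin d) ℂ →ₗ[ℂ] ℂ :=
    ∑ j, ((mixedMoment μ s n).toMultilinearMap.toLinearMap M j).comp
      (LinearMap.mulLeft ℂ (M j) - LinearMap.mulRight ℂ (M j))
  have hD (N) : D N = ∑ j, mixedMoment μ s n (Function.update M j (M j * N - N * M j)) := by
    simp [D]
  rw [← hD]
  have hskew {N} (hN : N ∈ skewAdjoint (Matrix (Fin d) (Fin d) ℂ)) : D N = 0 :=
    (hD N).trans (sum_mixedMoment_commutator_of_skewAdjoint μ s M hN)
  have h₁ : N - star N ∈ skewAdjoint (Matrix (Fin d) (Fin d) ℂ) := by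
    simp [skewAdjoint.mem_iff]
  have h₂ : Complex.I • (N + star N) ∈ skewAdjoint (Matrix (Fin d) (Fin d) ℂ) := by
    simp [skewAdjoint.mem_iff, add_comm]
  have e : N = (1 / 2 : ℂ) • (N - star N) + (-Complex.I / 2) • (Complex.I • (N + star N)) := by
    rw [smul_smul, show -Complex.I / 2 * Complex.I = 1 / 2 by
      rw [div_mul_eq_mul_div, neg_mul, Complex.I_mul_I, neg_neg], ← smul_add]
    rw [sub_add_add_cancel, ← two_smul ℂ, smul_smul]
    norm_num
  rw [e, map_add, map_smul, map_smul, hskew h₁, hskew h₂]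
  simp

/-- Integration by parts for moments of a Haar random unit vector. -/
lemma mixedMoment_cons (s : Fin d) {n : ℕ} (A : Matrix (Fin d) (Fin d) ℂ)
    (M : Fin n → Matrix (Fin d) (Fin d) ℂ) :
    ((d : ℂ) + n) * mixedMoment μ s (n + 1) (Fin.cons A M) =
      A.trace * mixedMoment μ s n M +
        ∑ j, mixedMoment μ s n (Function.update M j (A * M j)) := by
  have h₀ : ∑ a, ∑ b, mixedMoment μ s (n + 1)
      (Fin.cons (A * single a b 1 * single b a 1 - single b a 1 * (A * single a b 1)) M) =
      d * mixedMoment μ s (n + 1) (Fin.cons A M) - A.trace * mixedMoment μ s n M := by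
    let L : Matrix (Fin d) (Fin d) ℂ →ₗ[ℂ] ℂ :=
      (mixedMoment μ s (n + 1)).toMultilinearMap.toLinearMap (Fin.cons 0 M) 0
    have hL (X) : L X = mixedMoment μ s (n + 1) (Fin.cons X M) := by simp [L]
    have hone : mixedMoment μ s (n + 1) (Fin.cons 1 M) = mixedMoment μ s n M := by
      simp [mixedMoment_apply, Fin.prod_univ_succ, columnState_one]
    simp only [← hL, ← map_sum, Finset.sum_sub_distrib]
    rw [sum_mul_single_mul_single, sum_single_mul_mul_single, map_sub, map_smul, map_smul,
      hL 1, hone, smul_eq_mul, smul_eq_mul]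
  have h : ∑ a, ∑ b, ∑ j, mixedMoment μ s (n + 1)
      (Function.update (Fin.cons (A * single a b 1) M) j
        ((Fin.cons (A * single a b 1) M : Fin (n + 1) → Matrix (Fin d) (Fin d) ℂ) j *
          single b a 1 - single b a 1 *
          (Fin.cons (A * single a b 1) M : Fin (n + 1) → Matrix (Fin d) (Fin d) ℂ) j)) = 0 :=
    Finset.sum_eq_zero fun a _ => Finset.sum_eq_zero fun b _ =>
      sum_mixedMoment_commutator μ s _ _
  simp only [Fin.sum_univ_succ, Fin.cons_zero, Fin.cons_succ, Fin.update_cons_zero,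
    ← Fin.cons_update, Finset.sum_add_distrib] at h
  rw [h₀] at h
  have hswap : ∑ a, ∑ b, ∑ j, mixedMoment μ s (n + 1) (Fin.cons (A * single a b 1)
      (Function.update M j (M j * single b a 1 - single b a 1 * M j))) =
      n * mixedMoment μ s (n + 1) (Fin.cons A M) -
        ∑ j, mixedMoment μ s n (Function.update M j (A * M j)) := by
    calc _ = ∑ j, ∑ a, ∑ b, mixedMoment μ s (n + 1) (Fin.cons (A * single a b 1)
          (Function.update M j (M j * single b a 1 - single b a 1 * M j))) := by
          rw [Finset.sum_comm (s := (Finset.univ : Finset (Fin n)))]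
          refine Finset.sum_congr rfl fun a _ => ?_
          rw [Finset.sum_comm]
      _ = _ := by
          simp only [sum_mixedMoment_cons_mul_single, Finset.sum_sub_distrib]
          simp
  rw [hswap] at h
  linear_combination h

/-- Moment bound for contractions with weights: merging two contractions multiplies weights. -/
lemma norm_mixedMoment_le (s : Fin d) {φ : ℝ} (hφ : 0 < φ) (hφ1 : φ ≤ 1) {n : ℕ}
    (M : Fin n → Matrix (Fin d) (Fin d) ℂ) (w : Fin n → ℝ) (hM : ∀ j, ‖M j‖ ≤ 1)
    (hw : ∀ j, φ⁻¹ ≤ w j) (htr : ∀ j, ‖(M j).trace‖ ≤ φ ^ 2 * d * w j) :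
    ‖mixedMoment μ s n M‖ ≤ (∏ j, w j) * ∏ k ∈ Finset.range n, (φ ^ 2 * d + k) / (d + k) := by
  have hd : 0 < (d : ℝ) := by exact_mod_cast s.pos
  have hinv : 1 ≤ φ⁻¹ := (one_le_inv₀ hφ).2 hφ1
  induction n with
  | zero => simp [mixedMoment_apply]
  | succ n ih =>
    set P := ∏ k ∈ Finset.range n, (φ ^ 2 * d + k) / ((d : ℝ) + k)
    have hwpos (j) : 0 < w j := (zero_lt_one.trans_le hinv).trans_le (hw j)
    have htail : ‖mixedMoment μ s n (Fin.tail M)‖ ≤ (∏ j, Fin.tail w j) * P :=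
      ih _ _ (fun j => hM _) (fun j => hw _) fun j => htr _
    have hmerge (j : Fin n) : ‖mixedMoment μ s n
        (Function.update (Fin.tail M) j (M 0 * Fin.tail M j))‖ ≤
        (w 0 * ∏ j, Fin.tail w j) * P := by
      have hprod : ∏ i, Function.update (Fin.tail w) j (w 0 * Fin.tail w j) i =
          w 0 * ∏ j, Fin.tail w j := by
        rw [Finset.prod_update_of_mem (Finset.mem_univ j), mul_assoc,
          ← Finset.prod_update_of_mem (Finset.mem_univ j), Function.update_eq_self]
      have hww : φ⁻¹ * φ⁻¹ ≤ w 0 * Fin.tail w j :=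
        mul_le_mul (hw _) (hw _) (by positivity) (hwpos 0).le
      have hnorm : ‖M 0 * Fin.tail M j‖ ≤ 1 :=
        (norm_mul_le _ _).trans (mul_le_one₀ (hM _) (norm_nonneg _) (hM _))
      rw [← hprod]
      refine ih _ _ (fun i => ?_) (fun i => ?_) fun i => ?_
      · rcases eq_or_ne i j with rfl | h
        · simpa using hnorm
        · simpa [h, Fin.tail] using hM i.succ
      · rcases eq_or_ne i j with rfl | h
        · simp only [Function.update_self]
          nlinarith
        · simpa [h, Fin.tail] using hw i.succ
      · rcases eq_or_ne i j with rfl | h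
        · simp only [Function.update_self]
          calc _ ≤ d * ‖M 0 * Fin.tail M i‖ := norm_trace_le _
            _ ≤ d * 1 := by gcongr
            _ = φ ^ 2 * d * (φ⁻¹ * φ⁻¹) := by field_simp
            _ ≤ _ := by gcongr
        · simpa [h, Fin.tail] using htr i.succ
    have hrec := mixedMoment_cons μ s (M 0) (Fin.tail M)
    rw [Fin.cons_self_tail] at hrec
    have hnorm : ((d : ℝ) + n) * ‖mixedMoment μ s (n + 1) M‖ ≤
        (φ ^ 2 * d + n) * ((w 0 * ∏ j, Fin.tail w j) * P) := by
      calc ((d : ℝ) + n) * ‖mixedMoment μ s (n + 1) M‖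
          = ‖((d : ℂ) + n) * mixedMoment μ s (n + 1) M‖ := by
            rw [norm_mul, ← Nat.cast_add (R := ℂ), Complex.norm_natCast, Nat.cast_add]
        _ ≤ ‖(M 0).trace‖ * ‖mixedMoment μ s n (Fin.tail M)‖ +
            ∑ j, ‖mixedMoment μ s n (Function.update (Fin.tail M) j (M 0 * Fin.tail M j))‖ := by
            rw [hrec]
            refine (norm_add_le _ _).trans ?_
            rw [norm_mul]
            gcongr
            exact norm_sum_le _ _
        _ ≤ (φ ^ 2 * d * w 0) * ((∏ j, Fin.tail w j) * P) +
            ∑ _j : Fin n, (w 0 * ∏ j, Fin.tail w j) * P := by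
            have := hwpos 0
            gcongr with j
            · exact htr 0
            · exact hmerge j
        _ = _ := by
            simp
            ring
    rw [Fin.prod_univ_succ, Finset.prod_range_succ]
    change _ ≤ w 0 * (∏ j, Fin.tail w j) * (P * _)
    rw [← mul_assoc, ← mul_div_assoc, le_div_iff₀ (by positivity)]
    linarith

lemma integral_norm_columnState_pow_le (s : Fin d) {φ : ℝ} (hφ : 0 < φ) (hφ1 : φ ≤ 1)
    {K : Matrix (Fin d) (Fin d) ℂ} (hK : ‖K‖ ≤ 1) (htr : ‖K.trace‖ ≤ φ * d) (k : ℕ) :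
    ∫ U, ‖columnState s U K‖ ^ (2 * k) ∂μ ≤ ((φ ^ 2 * d + 2 * k) / (φ * d)) ^ (2 * k) := by
  have hd : 0 < (d : ℝ) := by exact_mod_cast s.pos
  have htr' : ‖K.trace‖ ≤ φ ^ 2 * d * φ⁻¹ := htr.trans_eq (by field_simp)
  have hbound := norm_mixedMoment_le μ s hφ hφ1
    (Fin.append (fun _ : Fin k => K) fun _ : Fin k => Kᴴ) (fun _ => φ⁻¹)
    (fun j => by
      refine Fin.addCases (fun i => ?_) (fun i => ?_) j
      · simpa using hK
      · rw [Fin.append_right, l2_opNorm_conjTranspose]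
        exact hK)
    (fun _ => le_rfl)
    (fun j => by
      refine Fin.addCases (fun i => ?_) (fun i => ?_) j
      · simpa using htr'
      · rw [Fin.append_right, trace_conjTranspose, norm_star]
        exact htr')
  have hmoment : mixedMoment μ s (k + k)
      (Fin.append (fun _ : Fin k => K) fun _ : Fin k => Kᴴ) =
      ((∫ U, ‖columnState s U K‖ ^ (2 * k) ∂μ : ℝ) : ℂ) := by
    rw [mixedMoment_apply, ← integral_complex_ofReal]
    congr 1 with U
    simp only [Fin.prod_univ_add, Fin.append_left, Fin.append_right, Finset.prod_const,
      Finset.card_univ, Fintype.card_fin, columnState_conjTranspose]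
    rw [← mul_pow, Complex.star_def, Complex.mul_conj, Complex.normSq_eq_norm_sq]
    push_cast
    rw [pow_mul]
  rw [hmoment, Complex.norm_real] at hbound
  refine (le_abs_self _).trans (hbound.trans ?_)
  calc _ ≤ (∏ _j : Fin (k + k), φ⁻¹) *
        ∏ _k ∈ Finset.range (k + k), (φ ^ 2 * d + 2 * k) / d := by
        refine mul_le_mul_of_nonneg_left ?_ (by positivity)
        refine Finset.prod_le_prod (fun _ _ => by positivity) fun i hi => ?_
        have hi' : (i : ℝ) ≤ 2 * k := by
          have := Finset.mem_range.1 hi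
          exact_mod_cast (by omega : i ≤ 2 * k)
        gcongr
        simp
    _ = _ := by
        simp only [Finset.prod_const, Finset.card_univ, Fintype.card_fin, Finset.card_range]
        rw [← mul_pow, ← two_mul]
        congr 1
        field_simp

end Moments

section Kraus

open scoped Matrix.Norms.L2Operator MatrixOrder

variable {d r : ℕ} {K : Fin r → Matrix (Fin d) (Fin d) ℂ}

lemma norm_le_one_of_sum_conjTranspose_mul_self (hK : ∑ i, (K i)ᴴ * K i = 1) (i : Fin r) :
    ‖K i‖ ≤ 1 := by
  have hnonneg (j : Fin r) : 0 ≤ (K j)ᴴ * K j := star_mul_self_nonneg (K j)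
  have hle : (K i)ᴴ * K i ≤ 1 := by
    rw [← hK]
    exact Finset.single_le_sum (f := fun j => (K j)ᴴ * K j) (fun j _ => hnonneg j)
      (Finset.mem_univ i)
  have := (CStarAlgebra.norm_le_one_iff_of_nonneg _ (hnonneg i)).2 hle
  rw [l2_opNorm_conjTranspose_mul_self] at this
  nlinarith [norm_nonneg (K i)]

lemma sum_sq_norm_entry_le_one (hK : ∑ i, (K i)ᴴ * K i = 1) (s t : Fin d) :
    ∑ i, ‖K i t s‖ ^ 2 ≤ 1 := by
  have h : ∑ i, ∑ t, ‖K i t s‖ ^ 2 = 1 := by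
    have := congrFun (congrFun hK s) s
    simp only [Matrix.sum_apply, mul_apply, conjTranspose_apply, one_apply_eq, Complex.star_def,
      Complex.conj_mul'] at this
    exact_mod_cast this
  rw [← h]
  exact Finset.sum_le_sum fun i _ =>
    Finset.single_le_sum (f := fun t => ‖K i t s‖ ^ 2) (fun _ _ => sq_nonneg _)
      (Finset.mem_univ t)

lemma Xst_nonneg (s t : Fin d) (U : unitaryGroup (Fin d) ℂ) : 0 ≤ Xst K s t U :=
  Finset.sum_nonneg fun _ _ => sq_nonneg _

lemma Xst_le_one (hK : ∑ i, (K i)ᴴ * K i = 1) (s t : Fin d) (U : unitaryGroup (Fin d) ℂ) :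
    Xst K s t U ≤ 1 := by
  refine sum_sq_norm_entry_le_one
    (K := fun i => star (U : Matrix (Fin d) (Fin d) ℂ) * K i * (U : Matrix (Fin d) (Fin d) ℂ))
    ?_ s t
  have h (i : Fin r) :
      (star (U : Matrix (Fin d) (Fin d) ℂ) * K i * (U : Matrix (Fin d) (Fin d) ℂ))ᴴ *
        (star (U : Matrix (Fin d) (Fin d) ℂ) * K i * (U : Matrix (Fin d) (Fin d) ℂ)) =
      star (U : Matrix (Fin d) (Fin d) ℂ) * ((K i)ᴴ * K i) *
        (U : Matrix (Fin d) (Fin d) ℂ) := by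
    have hU : (U : Matrix (Fin d) (Fin d) ℂ) * star (U : Matrix (Fin d) (Fin d) ℂ) = 1 :=
      Unitary.mul_star_self_of_mem U.2
    rw [star_eq_conjTranspose] at hU ⊢
    simp only [conjTranspose_mul, conjTranspose_conjTranspose]
    calc _ = (U : Matrix (Fin d) (Fin d) ℂ)ᴴ * (K i)ᴴ *
          ((U : Matrix (Fin d) (Fin d) ℂ) * (U : Matrix (Fin d) (Fin d) ℂ)ᴴ) * K i * U := by
          simp only [mul_assoc]
      _ = _ := by
          rw [hU]
          simp only [mul_assoc, one_mul]
  simp only [h, ← Finset.mul_sum, ← Finset.sum_mul, hK, mul_one]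
  exact Unitary.star_mul_self_of_mem U.2

lemma Xst_self_eq (s : Fin d) (U : unitaryGroup (Fin d) ℂ) :
    Xst K s s U = ∑ i, ‖columnState s U (K i)‖ ^ 2 := rfl

lemma measurable_Xst_self (s : Fin d) : Measurable (Xst K s s) :=
  Finset.measurable_sum _ fun i _ => ((measurable_columnState s (K i)).norm.pow_const 2)

variable (μ : Measure (unitaryGroup (Fin d) ℂ)) [IsProbabilityMeasure μ]

lemma integrable_Xst_self_pow (hK : ∑ i, (K i)ᴴ * K i = 1) (s : Fin d) (k : ℕ) :
    Integrable (fun U => Xst K s s U ^ k) μ := by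
  refine .of_bound ((measurable_Xst_self s).pow_const k).aestronglyMeasurable 1
    (.of_forall fun U => ?_)
  rw [norm_pow, Real.norm_of_nonneg (Xst_nonneg s s U)]
  exact pow_le_one₀ (Xst_nonneg s s U) (Xst_le_one hK s s U)

lemma sum_pow_le_card_pow_mul_sum_pow {f : Fin r → ℝ} (hf : ∀ i, 0 ≤ f i) (n : ℕ) :
    (∑ i, f i) ^ (n + 1) ≤ r ^ n * ∑ i, f i ^ (n + 1) := by
  rcases r.eq_zero_or_pos with rfl | hr
  · simp
  · have := pow_sum_div_card_le_sum_pow (s := Finset.univ) (fun i _ => hf i) n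
    rwa [div_le_iff₀' (by simp; positivity), Finset.card_univ, Fintype.card_fin] at this

lemma integral_Xst_self_pow_le [μ.IsMulLeftInvariant] (hK : ∑ i, (K i)ᴴ * K i = 1) {φ : ℝ}
    (hφ : 0 < φ) (hφ1 : φ ≤ 1) (htr : ∀ i, ‖(K i).trace‖ ≤ φ * d) (s : Fin d) {k m : ℕ}
    (hkm : k ≤ m) :
    ∫ U, Xst K s s U ^ k ∂μ ≤ (√r * (φ ^ 2 * d + 2 * m) / (φ * d)) ^ (2 * k) := by
  have hd : 0 < (d : ℝ) := by exact_mod_cast s.pos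
  rcases k with _ | n
  · simp
  have hint (i : Fin r) :
      Integrable (fun U => (‖columnState s U (K i)‖ ^ 2) ^ (n + 1)) μ := by
    refine .of_bound
      (((measurable_columnState s (K i)).norm.pow_const 2).pow_const _).aestronglyMeasurable 1
      (.of_forall fun U => ?_)
    rw [Real.norm_of_nonneg (by positivity), ← pow_mul]
    exact pow_le_one₀ (norm_nonneg _)
      ((norm_columnState_le s U (K i)).trans (norm_le_one_of_sum_conjTranspose_mul_self hK i))
  calc ∫ U, Xst K s s U ^ (n + 1) ∂μ
      ≤ ∫ U, (r : ℝ) ^ n * ∑ i, (‖columnState s U (K i)‖ ^ 2) ^ (n + 1) ∂μ := by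
        refine integral_mono (integrable_Xst_self_pow μ hK s _)
          ((integrable_finsetSum _ fun i _ => hint i).const_mul _) fun U => ?_
        exact sum_pow_le_card_pow_mul_sum_pow (fun i => sq_nonneg _) n
    _ = (r : ℝ) ^ n * ∑ i, ∫ U, ‖columnState s U (K i)‖ ^ (2 * (n + 1)) ∂μ := by
        rw [integral_const_mul, integral_finsetSum _ fun i _ => hint i]
        simp only [pow_mul]
    _ ≤ (r : ℝ) ^ n * ∑ _i : Fin r, ((φ ^ 2 * d + 2 * m) / (φ * d)) ^ (2 * (n + 1)) := by
        gcongr with i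
        refine (integral_norm_columnState_pow_le μ s hφ hφ1
          (norm_le_one_of_sum_conjTranspose_mul_self hK i) (htr i) (n + 1)).trans ?_
        gcongr
    _ = _ := by
        rw [mul_div_assoc, mul_pow, pow_mul (√(r : ℝ)), Real.sq_sqrt (Nat.cast_nonneg r)]
        simp
        ring

end Kraus

lemma exp_mul_le_sum_add_pow_mul_exp {t x : ℝ} (ht : 0 ≤ t) (hx : 0 ≤ x) (hx1 : x ≤ 1) (n : ℕ) :
    Real.exp (t * x) ≤
      ∑ k ∈ Finset.range n, t ^ k / k.factorial * x ^ k + Real.exp t * x ^ n := by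
  have hsum (y : ℝ) : Summable fun k : ℕ => y ^ k / k.factorial :=
    Real.summable_pow_div_factorial y
  have hexp (y : ℝ) : Real.exp y = ∑ k ∈ Finset.range n, y ^ k / k.factorial +
      ∑' k : ℕ, y ^ (k + n) / (k + n).factorial := by
    rw [Real.exp_eq_exp_ℝ, NormedSpace.exp_eq_tsum_div]
    exact ((hsum y).sum_add_tsum_nat_add n).symm
  have htail (y : ℝ) : Summable fun k : ℕ => y ^ (k + n) / (k + n).factorial :=
    (summable_nat_add_iff n).2 (hsum y)
  have hle : ∑' k : ℕ, (t * x) ^ (k + n) / (k + n).factorial ≤ Real.exp t * x ^ n := by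
    calc _ ≤ ∑' k : ℕ, t ^ (k + n) / (k + n).factorial * x ^ n := by
          refine (htail _).tsum_le_tsum (fun k => ?_) ((htail t).mul_right _)
          rw [mul_pow, mul_div_right_comm]
          gcongr ?_ * ?_
          exact pow_le_pow_of_le_one hx hx1 (Nat.le_add_left n k)
      _ = (∑' k : ℕ, t ^ (k + n) / (k + n).factorial) * x ^ n := tsum_mul_right
      _ ≤ _ := by
          gcongr
          rw [hexp t]
          exact le_add_of_nonneg_left (Finset.sum_nonneg fun k _ => by positivity)
  rw [hexp (t * x)]
  refine add_le_add (le_of_eq ?_) hle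
  refine Finset.sum_congr rfl fun k _ => ?_
  rw [mul_pow, mul_div_right_comm]

lemma integral_exp_mul_Xst_self_le {d r : ℕ} {K : Fin r → Matrix (Fin d) (Fin d) ℂ}
    (μ : Measure (unitaryGroup (Fin d) ℂ)) [IsProbabilityMeasure μ] [μ.IsMulLeftInvariant]
    (hK : ∑ i, (K i)ᴴ * K i = 1) {φ : ℝ} (hφ : 0 < φ) (hφ1 : φ ≤ 1)
    (htr : ∀ i, ‖(K i).trace‖ ≤ φ * d) (s : Fin d) {t : ℝ} (ht : 0 ≤ t) (m : ℕ)
    (hint : Integrable (fun U => Real.exp (t * Xst K s s U)) μ) :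
    ∫ U, Real.exp (t * Xst K s s U) ∂μ ≤
      Real.exp (t * (√r * (φ ^ 2 * d + 2 * m) / (φ * d)) ^ 2) +
        Real.exp t * (√r * (φ ^ 2 * d + 2 * m) / (φ * d)) ^ (2 * m) := by
  set A := √r * (φ ^ 2 * d + 2 * m) / (φ * d)
  have hX (k : ℕ) := integrable_Xst_self_pow μ hK s k
  have hsum : Integrable (fun U => ∑ k ∈ Finset.range m,
      t ^ k / k.factorial * Xst K s s U ^ k) μ :=
    integrable_finsetSum _ fun k _ => (hX k).const_mul _
  calc _ ≤ ∫ U, (∑ k ∈ Finset.range m, t ^ k / k.factorial * Xst K s s U ^ k +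
          Real.exp t * Xst K s s U ^ m) ∂μ :=
        integral_mono hint (hsum.add ((hX m).const_mul _)) fun U =>
          exp_mul_le_sum_add_pow_mul_exp ht (Xst_nonneg s s U) (Xst_le_one hK s s U) m
    _ = ∑ k ∈ Finset.range m, t ^ k / k.factorial * ∫ U, Xst K s s U ^ k ∂μ +
          Real.exp t * ∫ U, Xst K s s U ^ m ∂μ := by
        rw [integral_add hsum ((hX m).const_mul _),
          integral_finsetSum _ fun k _ => (hX k).const_mul _]
        simp only [integral_const_mul]
    _ ≤ ∑ k ∈ Finset.range m, t ^ k / k.factorial * A ^ (2 * k) +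
          Real.exp t * A ^ (2 * m) := by
        gcongr with k hk
        · exact integral_Xst_self_pow_le μ hK hφ hφ1 htr s (Finset.mem_range.1 hk).le
        · exact integral_Xst_self_pow_le μ hK hφ hφ1 htr s le_rfl
    _ ≤ _ := by
        gcongr
        refine le_trans (le_of_eq ?_)
          (Real.sum_le_exp_of_nonneg (mul_nonneg ht (sq_nonneg A)) m)
        refine Finset.sum_congr rfl fun k _ => ?_
        rw [mul_pow, ← pow_mul, mul_div_right_comm]

/-- Deviation bound, diagonal case. -/
theorem deviation_bound_diag :
    ∃ C : ℝ, 0 < C ∧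
      ∀ (θ θ₀ d r : ℕ), 0 < θ → 0 < θ₀ → (θ₀ : ℝ) ≤ Real.sqrt d →
        Real.sqrt 6 * ((2 * θ₀ : ℕ) : ℝ) ^ ((7 : ℝ) / 4) < (d : ℝ) →
        ∀ φ : ℝ, 0 < φ → φ ≤ 1 →
          ∀ (μ : Measure (Matrix.unitaryGroup (Fin d) ℂ)),
            IsProbabilityMeasure μ → μ.IsMulLeftInvariant →
            ∀ (K : Fin r → Matrix (Fin d) (Fin d) ℂ),
              (∑ i, (K i)ᴴ * K i = 1) →
              ((∑ i, ‖(K i).trace‖ ^ 2) / (d : ℝ) ^ 2 ≤ φ ^ 2) →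
              ∀ s : Fin d, ∀ ε : ℝ, 0 < ε →
                μ {U | ε ≤ Xst K s s U} ≤
                  ENNReal.ofReal (C * Real.exp (-(θ : ℝ) * ε) *
                    (Real.exp ((r : ℝ) * θ * (φ ^ 2 * d + 2 * θ₀) ^ 2 / ((d : ℝ) ^ 2 * φ ^ 2)) +
                      Real.exp θ *
                        (Real.sqrt r * (φ ^ 2 * d + 2 * θ₀) / (φ * d)) ^ (2 * θ₀))) := by
  refine ⟨1, one_pos, ?_⟩
  intro θ θ₀ d r _ _ _ _ φ hφ hφ1 μ hμ hinv K hK hF s ε _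
  have hd : 0 < (d : ℝ) := by exact_mod_cast s.pos
  have htr (i : Fin r) : ‖(K i).trace‖ ≤ φ * d := by
    rw [div_le_iff₀ (by positivity), ← mul_pow] at hF
    refine le_of_sq_le_sq ?_ (by positivity)
    exact (Finset.single_le_sum (f := fun i => ‖(K i).trace‖ ^ 2) (fun _ _ => sq_nonneg _)
      (Finset.mem_univ i)).trans hF
  have hint : Integrable (fun U => Real.exp (θ * Xst K s s U)) μ := by
    refine .of_bound (((measurable_Xst_self s).const_mul _).exp).aestronglyMeasurable
      (Real.exp θ) (.of_forall fun U => ?_)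
    rw [Real.norm_of_nonneg (Real.exp_pos _).le, Real.exp_le_exp]
    exact mul_le_of_le_one_right (Nat.cast_nonneg θ) (Xst_le_one hK s s U)
  rw [← ofReal_measureReal]
  refine ENNReal.ofReal_le_ofReal ?_
  refine (ProbabilityTheory.measure_ge_le_exp_mul_mgf ε (Nat.cast_nonneg θ) hint).trans ?_
  rw [one_mul]
  gcongr
  refine (integral_exp_mul_Xst_self_le μ hK hφ hφ1 htr s (Nat.cast_nonneg θ) θ₀ hint).trans ?_
  refine le_of_eq ?_
  congr 2
  rw [div_pow, mul_pow, Real.sq_sqrt (Nat.cast_nonneg r)]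
  ring

end
end

section
/- (Tamper detection against replacement channels.) Let α, γ be real constants with 0 ≤ α < 1 and γ ≥ 2/(1−α). Then there exists k₀ ∈ ℕ such that for every integer k ≥ k₀ for which n := γ·k is an integer, setting d := 2^n, the following holds: for every finite nonempty set S of unit vectors in ℂ^d with |S| ≤ 2^{d^α}, there exists a unitary U ∈ U(d) such that for every ψ ∈ S, ∑_{m'∈{0,1}^k} |⟨e_{m'} ⊗ e_0, U ψ⟩|² ≤ 2^{−k}. Consequently, the Haar-random scheme with this U is a 2^{−k}-tamper detection code against the family of replacement channels { ρ ↦ |ψ⟩⟨ψ| : ψ ∈ S }. -/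
open Matrix

noncomputable section

/-- The index set of `ℂ^d ≅ ℂ^{2^k} ⊗ ℂ^{2^{n-k}}`, `d = 2^n`. -/
abbrev CodeIdx (k m : ℕ) := Fin (2 ^ k) × Fin (2 ^ m)

/-- The first standard basis index of the ancilla register `ℂ^{2^m}`. -/
def anc0 (m : ℕ) : Fin (2 ^ m) := ⟨0, Nat.two_pow_pos m⟩

/-- Orthogonality of the characters of the cyclic group of order `M`. -/
theorem IsPrimitiveRoot.sum_pow_mul_conj_pow {ζ : ℂ} {M : ℕ} (hζ : IsPrimitiveRoot ζ M)
    {i j : ℕ} (hi : i < M) (hj : j < M) :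
    ∑ t : Fin M, ζ ^ (i * (t : ℕ)) * (starRingEnd ℂ) (ζ ^ (j * (t : ℕ))) =
      if i = j then (M : ℂ) else 0 := by
  have hM : M ≠ 0 := by omega
  have hnorm : ‖ζ‖ = 1 := hζ.norm'_eq_one hM
  have hconj : (starRingEnd ℂ) ζ = ζ⁻¹ := (Complex.inv_eq_conj hnorm).symm
  have hζ0 : ζ ≠ 0 := hζ.ne_zero hM
  have hterm : ∀ t : Fin M, ζ ^ (i * (t : ℕ)) * (starRingEnd ℂ) (ζ ^ (j * (t : ℕ))) =
      (ζ ^ i * (ζ ^ j)⁻¹) ^ (t : ℕ) := by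
    intro t
    rw [map_pow, hconj, mul_pow, pow_mul, inv_pow, inv_pow, pow_mul]
  simp_rw [hterm]
  rw [Fin.sum_univ_eq_sum_range (fun t => (ζ ^ i * (ζ ^ j)⁻¹) ^ t) M]
  split_ifs with h
  · subst h
    simp [hζ0]
  · have hne : ζ ^ i * (ζ ^ j)⁻¹ ≠ 1 := by
      intro h1
      rw [mul_inv_eq_one₀ (pow_ne_zero _ hζ0)] at h1
      exact h (hζ.pow_inj hi hj h1)
    rw [geom_sum_eq hne, mul_pow, inv_pow, ← pow_mul, ← pow_mul, mul_comm i, mul_comm j, pow_mul,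
      pow_mul, hζ.pow_eq_one]
    simp

/-- Parseval's identity for polynomials evaluated at the roots of unity. -/
theorem IsPrimitiveRoot.sum_norm_sq_eval {ζ : ℂ} {M : ℕ} (hζ : IsPrimitiveRoot ζ M)
    {q : ℕ} (hq : q ≤ M) (c : ℕ → ℂ) :
    ∑ t : Fin M, ‖∑ i ∈ Finset.range q, c i * ζ ^ (i * (t : ℕ))‖ ^ 2 =
      M * ∑ i ∈ Finset.range q, ‖c i‖ ^ 2 := by
  have key : ∑ t : Fin M, ((‖∑ i ∈ Finset.range q, c i * ζ ^ (i * (t : ℕ))‖ : ℂ)) ^ 2 =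
      M * ∑ i ∈ Finset.range q, (‖c i‖ : ℂ) ^ 2 := by
    simp_rw [← Complex.mul_conj', map_sum, map_mul, Finset.sum_mul_sum]
    rw [Finset.sum_comm, Finset.mul_sum]
    refine Finset.sum_congr rfl fun i hi => ?_
    rw [Finset.sum_comm]
    have hi' : i < M := (Finset.mem_range.mp hi).trans_le hq
    calc _ = ∑ j ∈ Finset.range q, c i * (starRingEnd ℂ) (c j) *
          (if i = j then (M : ℂ) else 0) := by
          refine Finset.sum_congr rfl fun j hj => ?_
          rw [← hζ.sum_pow_mul_conj_pow hi' ((Finset.mem_range.mp hj).trans_le hq),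
            Finset.mul_sum]
          exact Finset.sum_congr rfl fun t _ => by ring
      _ = _ := by
          simp only [mul_ite, mul_zero, Finset.sum_ite_eq, hi, if_true]
          ring
  exact_mod_cast key

theorem IsPrimitiveRoot.sum_norm_pow_mul_add_pow {ζ : ℂ} {M : ℕ} (hζ : IsPrimitiveRoot ζ M)
    {p : ℕ} (hp : p < M) (x y : ℂ) :
    ∑ t : Fin M, ‖ζ ^ (t : ℕ) * y + x‖ ^ (2 * p) =
      M * ∑ i ∈ Finset.range (p + 1),
        (p.choose i : ℝ) ^ 2 * (‖y‖ ^ (2 * i) * ‖x‖ ^ (2 * (p - i))) := by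
  have h := hζ.sum_norm_sq_eval hp fun i => y ^ i * x ^ (p - i) * (p.choose i : ℂ)
  convert h using 1
  · refine Finset.sum_congr rfl fun t _ => ?_
    rw [mul_comm 2 p, pow_mul, ← norm_pow, add_pow]
    congr 2
    refine Finset.sum_congr rfl fun i _ => ?_
    rw [mul_pow, ← pow_mul, mul_comm (t : ℕ) i]
    ring
  · congr 1
    refine Finset.sum_congr rfl fun i _ => ?_
    simp only [norm_mul, norm_pow, Complex.norm_natCast]
    ring

/-- The `2p`-th moment of a sum with independent uniform phases is at most that of a complex
Gaussian of the same variance. -/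
theorem IsPrimitiveRoot.sum_norm_sum_phases_pow_le {ζ : ℂ} {M : ℕ} (hζ : IsPrimitiveRoot ζ M)
    (N : ℕ) {p : ℕ} (hp : p < M) (φ : Fin N → ℂ) :
    ∑ t : Fin N → Fin M, ‖∑ j, ζ ^ (t j : ℕ) * φ j‖ ^ (2 * p) ≤
      (M : ℝ) ^ N * (p.factorial * (∑ j, ‖φ j‖ ^ 2) ^ p) := by
  induction N generalizing p with
  | zero =>
    rcases Nat.eq_zero_or_pos p with rfl | h
    · simp
    · simp [h.ne']
  | succ N ih =>
    rw [← (Fin.consEquiv fun _ => Fin M).sum_comp, Fintype.sum_prod_type, Finset.sum_comm]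
    simp only [Fin.consEquiv_apply, Fin.sum_univ_succ, Fin.cons_zero, Fin.cons_succ]
    simp_rw [hζ.sum_norm_pow_mul_add_pow hp]
    rw [← Finset.mul_sum, Finset.sum_comm, pow_succ', mul_assoc]
    refine mul_le_mul_of_nonneg_left ?_ (Nat.cast_nonneg M)
    rw [add_pow, Finset.mul_sum, Finset.mul_sum]
    refine Finset.sum_le_sum fun i hi => ?_
    have hip : i ≤ p := Nat.lt_succ_iff.mp (Finset.mem_range.mp hi)
    have hfac : p.choose i * (p - i).factorial ≤ p.factorial := by
      rw [← Nat.choose_mul_factorial_mul_factorial hip]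
      refine Nat.mul_le_mul_right _ ?_
      exact Nat.le_mul_of_pos_right _ (Nat.factorial_pos i)
    have hfac' : (p.choose i : ℝ) * (p - i).factorial ≤ p.factorial := by exact_mod_cast hfac
    rw [← Finset.mul_sum, ← Finset.mul_sum]
    have hr : (0 : ℝ) ≤ ∑ j : Fin N, ‖φ j.succ‖ ^ 2 := by positivity
    calc _ ≤ (p.choose i : ℝ) ^ 2 * (‖φ 0‖ ^ (2 * i) * ((M : ℝ) ^ N *
            ((p - i).factorial * (∑ j : Fin N, ‖φ j.succ‖ ^ 2) ^ (p - i)))) := by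
          gcongr
          exact ih (by omega) _
      _ = (p.choose i * (p - i).factorial : ℝ) * ((M : ℝ) ^ N *
            ((‖φ 0‖ ^ 2) ^ i * (∑ j : Fin N, ‖φ j.succ‖ ^ 2) ^ (p - i) * p.choose i)) := by
          rw [pow_mul]; ring
      _ ≤ p.factorial * ((M : ℝ) ^ N *
            ((‖φ 0‖ ^ 2) ^ i * (∑ j : Fin N, ‖φ j.succ‖ ^ 2) ^ (p - i) * p.choose i)) := by
          gcongr
      _ = _ := by ring

/-- The discrete Fourier transform preceded by a diagonal unitary. -/
theorem dft_mul_phases_mem_unitaryGroup {ι : Type*} [Fintype ι] [DecidableEq ι] {d : ℕ}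
    (e : ι ≃ Fin d) {ω : ℂ} (hω : IsPrimitiveRoot ω d) (g : Fin d → ℂ) (hg : ∀ j, ‖g j‖ = 1) :
    (Matrix.of fun i j => ((√(d : ℝ))⁻¹ : ℂ) * (ω ^ ((e i : ℕ) * (e j : ℕ)) * g (e j))) ∈
      Matrix.unitaryGroup ι ℂ := by
  rw [Matrix.mem_unitaryGroup_iff]
  ext i j
  have hd : 0 < d := (e i).pos
  have hs : ((√(d : ℝ))⁻¹ : ℂ) * ((√(d : ℝ))⁻¹ : ℂ) * d = 1 := by
    have h : (√(d : ℝ))⁻¹ * (√(d : ℝ))⁻¹ * d = 1 := by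
      have hd' : (0 : ℝ) < d := by exact_mod_cast hd
      rw [← mul_inv, Real.mul_self_sqrt hd'.le, inv_mul_cancel₀ hd'.ne']
    exact_mod_cast h
  simp only [Matrix.mul_apply, Matrix.star_apply, Matrix.of_apply]
  calc _ = ((√(d : ℝ))⁻¹ : ℂ) * ((√(d : ℝ))⁻¹ : ℂ) * ∑ l : ι,
        ω ^ ((e i : ℕ) * (e l : ℕ)) * (starRingEnd ℂ) (ω ^ ((e j : ℕ) * (e l : ℕ))) := by
        rw [Finset.mul_sum]
        refine Finset.sum_congr rfl fun l _ => ?_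
        have h1 : g (e l) * (starRingEnd ℂ) (g (e l)) = 1 := by
          rw [Complex.mul_conj', hg]; simp
        simp only [RCLike.star_def, map_mul, map_inv₀, Complex.conj_ofReal]
        linear_combination (((√(d : ℝ))⁻¹ : ℂ) * ((√(d : ℝ))⁻¹ : ℂ) *
          ω ^ ((e i : ℕ) * (e l : ℕ)) * (starRingEnd ℂ) (ω ^ ((e j : ℕ) * (e l : ℕ)))) * h1
    _ = _ := by
        rw [e.sum_comp fun l : Fin d =>
            ω ^ ((e i : ℕ) * (l : ℕ)) * (starRingEnd ℂ) (ω ^ ((e j : ℕ) * (l : ℕ))),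
          hω.sum_pow_mul_conj_pow (e i).isLt (e j).isLt]
        by_cases h : i = j
        · subst h; simpa using hs
        · have : (e i : ℕ) ≠ (e j : ℕ) := fun h' => h (e.injective (Fin.ext h'))
          simp [h, this]

/-- The `p`-th moment method over randomly phased Fourier matrices. -/
theorem exists_unitary_sum_norm_sq_pow_le {ι κ : Type*} [Fintype ι] [DecidableEq ι] [Nonempty ι]
    [Fintype κ] (r : κ → ι) (S : Finset (ι → ℂ)) (hS : ∀ ψ ∈ S, ∑ j, ‖ψ j‖ ^ 2 = 1) (p : ℕ) :
    ∃ U ∈ Matrix.unitaryGroup ι ℂ, ∀ ψ ∈ S,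
      ∑ i, (Fintype.card ι * ‖U.mulVec ψ (r i)‖ ^ 2) ^ p ≤
        S.card * Fintype.card κ * (p.factorial : ℝ) := by
  set d := Fintype.card ι
  have hd : d ≠ 0 := Fintype.card_ne_zero
  let e : ι ≃ Fin d := Fintype.equivFin ι
  have hω := Complex.isPrimitiveRoot_exp d hd
  set ω := Complex.exp (2 * Real.pi * Complex.I / d)
  have hζ := Complex.isPrimitiveRoot_exp (p + 1) p.succ_ne_zero
  set ζ := Complex.exp (2 * Real.pi * Complex.I / (p + 1 : ℕ))
  have hω1 : ‖ω‖ = 1 := hω.norm'_eq_one hd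
  have hζ1 : ‖ζ‖ = 1 := hζ.norm'_eq_one p.succ_ne_zero
  let X : (Fin d → Fin (p + 1)) → (ι → ℂ) → κ → ℝ := fun t ψ i =>
    ‖∑ j : Fin d, ζ ^ (t j : ℕ) * (ω ^ ((e (r i) : ℕ) * (j : ℕ)) * ψ (e.symm j))‖ ^ (2 * p)
  have hX0 : ∀ t ψ i, 0 ≤ X t ψ i := fun t ψ i => by positivity
  have hmoment : ∀ ψ ∈ S, ∀ i, ∑ t, X t ψ i ≤ ((p + 1 : ℕ) : ℝ) ^ d * p.factorial := by
    intro ψ hψ i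
    refine (hζ.sum_norm_sum_phases_pow_le d p.lt_succ_self _).trans_eq ?_
    have : ∑ j : Fin d, ‖ω ^ ((e (r i) : ℕ) * (j : ℕ)) * ψ (e.symm j)‖ ^ 2 = 1 := by
      simp only [norm_mul, norm_pow, hω1, one_pow, one_mul]
      rw [e.symm.sum_comp fun j => ‖ψ j‖ ^ 2, hS ψ hψ]
    rw [this, one_pow, mul_one]
  obtain ⟨t, -, ht⟩ : ∃ t ∈ (Finset.univ : Finset (Fin d → Fin (p + 1))),
      ∑ ψ ∈ S, ∑ i, X t ψ i ≤ S.card * Fintype.card κ * (p.factorial : ℝ) := by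
    refine Finset.exists_le_of_sum_le Finset.univ_nonempty ?_
    rw [Finset.sum_comm]
    calc _ = ∑ ψ ∈ S, ∑ i, ∑ t, X t ψ i := Finset.sum_congr rfl fun ψ _ => Finset.sum_comm
      _ ≤ ∑ ψ ∈ S, ∑ i : κ, ((p + 1 : ℕ) : ℝ) ^ d * p.factorial :=
          Finset.sum_le_sum fun ψ hψ => Finset.sum_le_sum fun i _ => hmoment ψ hψ i
      _ = _ := by simp; ring
  refine ⟨_, dft_mul_phases_mem_unitaryGroup e hω (fun j => ζ ^ (t j : ℕ)) (by simp [hζ1]),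
    fun ψ hψ => ?_⟩
  refine le_trans (le_of_eq ?_) ((Finset.single_le_sum
    (fun ψ _ => Finset.sum_nonneg fun i _ => hX0 t ψ i) hψ).trans ht)
  refine Finset.sum_congr rfl fun i _ => ?_
  have hsum : (Matrix.of fun i j => ((√(d : ℝ))⁻¹ : ℂ) *
      (ω ^ ((e i : ℕ) * (e j : ℕ)) * ζ ^ (t (e j) : ℕ))).mulVec ψ (r i) = ((√(d : ℝ))⁻¹ : ℂ) *
      ∑ j : Fin d, ζ ^ (t j : ℕ) * (ω ^ ((e (r i) : ℕ) * (j : ℕ)) * ψ (e.symm j)) := by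
    rw [← e.sum_comp, Finset.mul_sum]
    simp only [Matrix.mulVec, dotProduct, Matrix.of_apply, Equiv.symm_apply_apply]
    exact Finset.sum_congr rfl fun j _ => by ring
  have hd' : (0 : ℝ) < d := by exact_mod_cast Nat.pos_of_ne_zero hd
  rw [hsum, norm_mul, norm_inv, Complex.norm_real, Real.norm_of_nonneg (Real.sqrt_nonneg _),
    mul_pow _ _ 2, inv_pow, Real.sq_sqrt hd'.le, mul_inv_cancel_left₀ hd'.ne', ← pow_mul]

/-- A small set of vectors can be rotated away from a given set of coordinates. -/
theorem exists_unitary_mulVec_eq_zero {ι κ : Type*} [Fintype ι] [DecidableEq ι] [Fintype κ]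
    (r : κ → ι) (hr : Function.Injective r) (S : Finset (ι → ℂ))
    (hcard : Fintype.card κ + S.card ≤ Fintype.card ι) :
    ∃ U ∈ Matrix.unitaryGroup ι ℂ, ∀ ψ ∈ S, ∀ i, U.mulVec ψ (r i) = 0 := by
  classical
  let E := EuclideanSpace ℂ ι
  let W : Submodule ℂ E := Submodule.span ℂ (S.image (WithLp.toLp 2 : (ι → ℂ) → E) : Finset E)
  have hW : Module.finrank ℂ W ≤ S.card :=
    (finrank_span_finset_le_card _).trans Finset.card_image_le
  have hadd := W.finrank_add_finrank_orthogonal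
  have hE : Module.finrank ℂ E = Fintype.card ι := finrank_euclideanSpace
  have hle : Fintype.card κ ≤ Module.finrank ℂ Wᗮ := by omega
  let b := stdOrthonormalBasis ℂ Wᗮ
  let f : κ → Fin (Module.finrank ℂ Wᗮ) := fun i => Fin.castLE hle (Fintype.equivFin κ i)
  have hf : Function.Injective f :=
    (Fin.castLE_injective hle).comp (Fintype.equivFin κ).injective
  have horth : Orthonormal ℂ fun i : κ => (b (f i) : E) :=
    (b.orthonormal.comp f hf).comp_linearIsometry Wᗮ.subtypeₗᵢ
  let v : ι → E := Function.extend r (fun i => (b (f i) : E)) 0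
  have hv : ∀ i, v (r i) = b (f i) := fun i => hr.extend_apply _ _ i
  have hvo : Orthonormal ℂ ((Set.range r).domRestrict v) := by
    have h := horth.comp (Equiv.ofInjective r hr).symm (Equiv.injective _)
    convert h using 1
    ext1 x
    obtain ⟨i, rfl⟩ := (Equiv.ofInjective r hr).surjective x
    simpa using hv i
  obtain ⟨c, hc⟩ := hvo.exists_orthonormalBasis_extension_of_card_eq hE
  refine ⟨(Matrix.of fun i j => (starRingEnd ℂ) (c i j) : Matrix ι ι ℂ), ?_, fun ψ hψ i => ?_⟩
  · rw [Matrix.mem_unitaryGroup_iff]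
    ext i j
    have h := (orthonormal_iff_ite.mp c.orthonormal) i j
    simp only [E, PiLp.inner_apply, RCLike.inner_apply] at h
    simp only [Matrix.mul_apply, Matrix.star_apply, Matrix.of_apply, RCLike.star_def,
      Complex.conj_conj, Matrix.one_apply, ← h]
    exact Finset.sum_congr rfl fun l _ => mul_comm _ _
  · have hmem : (WithLp.toLp 2 ψ : E) ∈ W :=
      Submodule.subset_span (Finset.mem_coe.mpr (Finset.mem_image_of_mem _ hψ))
    have h := Submodule.inner_left_of_mem_orthogonal hmem (b (f i)).2
    rw [← hv, ← hc _ ⟨i, rfl⟩] at h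
    simp only [PiLp.inner_apply, RCLike.inner_apply] at h
    simp only [Matrix.mulVec, dotProduct, Matrix.of_apply]
    rw [← h]
    exact Finset.sum_congr rfl fun l _ => mul_comm _ _

theorem factorial_mul_two_pow_succ_le_pow_self {p : ℕ} (hp : 9 ≤ p) :
    p.factorial * 2 ^ (p + 1) ≤ p ^ p := by
  induction p, hp using Nat.le_induction with
  | base => decide
  | succ p hp ih =>
    have hbern : 2 * p ^ p ≤ (p + 1) ^ p := by
      have hp0 : (0 : ℝ) < p := by exact_mod_cast (by omega : 0 < p)
      have h := one_add_mul_le_pow (a := (p : ℝ)⁻¹) (by linarith [inv_pos.mpr hp0]) p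
      rw [mul_inv_cancel₀ hp0.ne'] at h
      have hfactor : ((p : ℝ) + 1) ^ p = (1 + (p : ℝ)⁻¹) ^ p * (p : ℝ) ^ p := by
        rw [← mul_pow, add_mul, inv_mul_cancel₀ hp0.ne', one_mul]
      have hreal : 2 * (p : ℝ) ^ p ≤ ((p : ℝ) + 1) ^ p := by
        rw [hfactor]
        gcongr
        linarith
      exact_mod_cast hreal
    calc (p + 1).factorial * 2 ^ (p + 1 + 1)
        = (p + 1) * (2 * (p.factorial * 2 ^ (p + 1))) := by
          rw [Nat.factorial_succ]; ring
      _ ≤ (p + 1) * (2 * p ^ p) := by gcongr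
      _ ≤ (p + 1) * (p + 1) ^ p := by gcongr
      _ = (p + 1) ^ (p + 1) := by ring

theorem two_rpow_mul_factorial_floor_le {A : ℝ} (hA : 9 ≤ A) :
    (2 : ℝ) ^ A * (⌊A⌋₊.factorial : ℝ) ≤ A ^ ⌊A⌋₊ := by
  have hp : 9 ≤ ⌊A⌋₊ := Nat.le_floor (by exact_mod_cast hA)
  have hA0 : 0 ≤ A := by linarith
  have h2 : (2 : ℝ) ^ A ≤ (2 : ℝ) ^ (⌊A⌋₊ + 1) := by
    rw [← Real.rpow_natCast]
    exact Real.rpow_le_rpow_of_exponent_le one_le_two (by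
      push_cast; exact (Nat.lt_floor_add_one A).le)
  calc (2 : ℝ) ^ A * (⌊A⌋₊.factorial : ℝ)
      ≤ (2 : ℝ) ^ (⌊A⌋₊ + 1) * (⌊A⌋₊.factorial : ℝ) := by gcongr
    _ = (⌊A⌋₊.factorial : ℝ) * (2 : ℝ) ^ (⌊A⌋₊ + 1) := mul_comm _ _
    _ ≤ (⌊A⌋₊ : ℝ) ^ ⌊A⌋₊ := by exact_mod_cast factorial_mul_two_pow_succ_le_pow_self hp
    _ ≤ A ^ ⌊A⌋₊ := by gcongr; exact Nat.floor_le hA0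

/-- Any `2^A` unit vectors, `A ≥ 9`, can be rotated so that their weight on `K` given coordinates
is at most `1 / K`, provided that the dimension is at least `A K ^ 2`. -/
theorem exists_unitary_sum_norm_sq_le {ι κ : Type*} [Fintype ι] [DecidableEq ι] [Nonempty ι]
    [Fintype κ] [Nonempty κ] (r : κ → ι) (S : Finset (ι → ℂ))
    (hS : ∀ ψ ∈ S, ∑ j, ‖ψ j‖ ^ 2 = 1) {A : ℝ} (hA : 9 ≤ A) (hcard : (S.card : ℝ) ≤ 2 ^ A)
    (hdim : A * (Fintype.card κ : ℝ) ^ 2 ≤ Fintype.card ι) :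
    ∃ U ∈ Matrix.unitaryGroup ι ℂ, ∀ ψ ∈ S,
      ∑ i, ‖U.mulVec ψ (r i)‖ ^ 2 ≤ (Fintype.card κ : ℝ)⁻¹ := by
  have hp : 9 ≤ ⌊A⌋₊ := Nat.le_floor (by exact_mod_cast hA)
  have hfac := two_rpow_mul_factorial_floor_le hA
  obtain ⟨q, hq⟩ : ∃ q, ⌊A⌋₊ = q + 1 := ⟨⌊A⌋₊ - 1, by omega⟩
  rw [hq] at hfac
  obtain ⟨U, hU, h⟩ := exists_unitary_sum_norm_sq_pow_le r S hS (q + 1)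
  refine ⟨U, hU, fun ψ hψ => ?_⟩
  have hK : (0 : ℝ) < Fintype.card κ := by exact_mod_cast Fintype.card_pos
  have hd : (0 : ℝ) < Fintype.card ι := by exact_mod_cast Fintype.card_pos
  set K : ℝ := (Fintype.card κ : ℝ)
  set d : ℝ := (Fintype.card ι : ℝ)
  have hmean := pow_sum_div_card_le_sum_pow (s := Finset.univ)
    (f := fun i => d * ‖U.mulVec ψ (r i)‖ ^ 2) (fun i _ => by positivity) q
  rw [div_le_iff₀ (by rw [Finset.card_univ]; positivity), Finset.card_univ] at hmean
  have hpow : (∑ i, d * ‖U.mulVec ψ (r i)‖ ^ 2) ^ (q + 1) ≤ (K * A) ^ (q + 1) := by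
    calc _ ≤ (∑ i, (d * ‖U.mulVec ψ (r i)‖ ^ 2) ^ (q + 1)) * K ^ q := hmean
      _ ≤ (S.card * K * ((q + 1).factorial : ℝ)) * K ^ q := by gcongr; exact h ψ hψ
      _ ≤ ((2 : ℝ) ^ A * K * ((q + 1).factorial : ℝ)) * K ^ q := by gcongr
      _ = K ^ (q + 1) * ((2 : ℝ) ^ A * ((q + 1).factorial : ℝ)) := by ring
      _ ≤ K ^ (q + 1) * A ^ (q + 1) := by gcongr
      _ = _ := (mul_pow _ _ _).symm
  have hle := le_of_pow_le_pow_left₀ q.succ_ne_zero (by positivity) hpow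
  rw [← Finset.mul_sum] at hle
  rw [← mul_le_mul_iff_right₀ hd]
  refine hle.trans ?_
  rw [← div_eq_mul_inv, le_div_iff₀ hK]
  linarith

/-- Tamper detection against replacement channels: for every finite nonempty set `S` of
unit vectors in `ℂ^d`, `d = 2^n`, with `|S| ≤ 2^{d^α}`, there is a unitary `U` such that
for every `ψ ∈ S` the probability `∑_{m'} |⟨e_{m'} ⊗ e_0, U ψ⟩|²` that the decoder of the
Haar-random scheme fails to output ⊥ after the replacement tampering `ρ ↦ |ψ⟩⟨ψ|` is at
most `2^{-k}`. -/
theorem tamper_detection_replacement (α γ : ℝ)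
    (hα0 : 0 ≤ α) (hα : α < 1) (hγ : 2 / (1 - α) ≤ γ) :
    ∃ k₀ : ℕ, ∀ k : ℕ, k₀ ≤ k → ∀ n : ℕ, (n : ℝ) = γ * k →
      ∀ S : Finset (CodeIdx k (n - k) → ℂ),
        S.Nonempty →
        -- S consists of unit vectors
        (∀ ψ ∈ S, ∑ j, ‖ψ j‖ ^ 2 = 1) →
        -- |S| ≤ 2^{d^α}
        (S.card : ℝ) ≤ (2 : ℝ) ^ (((2 : ℝ) ^ n) ^ α) →
        ∃ U ∈ Matrix.unitaryGroup (CodeIdx k (n - k)) ℂ,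
          ∀ ψ ∈ S,
            ∑ m' : Fin (2 ^ k),
              ‖U.mulVec ψ (m', anc0 (n - k))‖ ^ 2 ≤ ((2 : ℝ) ^ k)⁻¹ := by
  have hγα : 2 ≤ γ * (1 - α) := (div_le_iff₀ (by linarith)).mp hγ
  have hγ0 : 0 ≤ γ := le_trans (div_nonneg zero_le_two (by linarith)) hγ
  refine ⟨⌈4 / α⌉₊ + 1, fun k hk n hn S _ hS hcard => ?_⟩
  have hk0 : (0 : ℝ) ≤ k := k.cast_nonneg
  have hnk : (k : ℝ) * 2 ≤ n * (1 - α) := by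
    rw [hn]; nlinarith
  have h2k : k * 2 ≤ n := by
    have : (k : ℝ) * 2 ≤ n := by nlinarith [(n.cast_nonneg : (0 : ℝ) ≤ n)]
    exact_mod_cast this
  have hdim : Fintype.card (CodeIdx k (n - k)) = 2 ^ n := by
    rw [Fintype.card_prod, Fintype.card_fin, Fintype.card_fin, ← pow_add]
    congr 1; omega
  rcases hα0.eq_or_lt with rfl | hαpos
  · rw [Real.rpow_zero, Real.rpow_one] at hcard
    have hS2 : S.card ≤ 2 := by exact_mod_cast hcard
    obtain ⟨U, hU, h⟩ := exists_unitary_mulVec_eq_zero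
      (fun m' : Fin (2 ^ k) => (m', anc0 (n - k))) (fun _ _ h => congrArg Prod.fst h) S (by
        rw [hdim, Fintype.card_fin]
        have h1 : 2 ≤ 2 ^ k := Nat.le_self_pow (by omega) 2
        have h2 : 2 ^ (k * 2) ≤ 2 ^ n := Nat.pow_le_pow_right two_pos h2k
        rw [pow_mul] at h2
        nlinarith)
    exact ⟨U, hU, fun ψ hψ => by simp [h ψ hψ]⟩
  · have hA : ((2 : ℝ) ^ n) ^ α = (2 : ℝ) ^ (n * α) := by
      rw [← Real.rpow_natCast, ← Real.rpow_mul zero_le_two]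
    have h4 : 4 ≤ n * α := by
      have h1 : (4 / α : ℝ) ≤ k :=
        (Nat.le_ceil _).trans (by exact_mod_cast (Nat.le_succ _).trans hk)
      rw [div_le_iff₀ hαpos] at h1
      have h3 : (k : ℝ) ≤ n := by exact_mod_cast (by omega : k ≤ n)
      exact h1.trans (by gcongr)
    have h9 : (9 : ℝ) ≤ ((2 : ℝ) ^ n) ^ α := by
      rw [hA]
      refine le_trans ?_ (Real.rpow_le_rpow_of_exponent_le one_le_two h4)
      norm_num
    have hdim' : ((2 : ℝ) ^ n) ^ α * (Fintype.card (Fin (2 ^ k)) : ℝ) ^ 2 ≤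
        Fintype.card (CodeIdx k (n - k)) := by
      rw [hdim, hA, Fintype.card_fin]
      push_cast
      rw [← pow_mul, ← Real.rpow_natCast, ← Real.rpow_natCast, ← Real.rpow_add two_pos]
      refine Real.rpow_le_rpow_of_exponent_le one_le_two ?_
      push_cast
      linarith
    have : Nonempty (CodeIdx k (n - k)) := ⟨(⟨0, Nat.two_pow_pos k⟩, anc0 _)⟩
    have : Nonempty (Fin (2 ^ k)) := ⟨⟨0, Nat.two_pow_pos k⟩⟩
    simpa using exists_unitary_sum_norm_sq_le
      (fun m' : Fin (2 ^ k) => (m', anc0 (n - k))) S hS h9 hcard hdim'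

end
end

section
/- (Exact overlap distribution for a Haar-random unitary.) Let d ≥ 1, let v, w ∈ ℂ^d be nonzero vectors, and let t be a real number with 0 ≤ t ≤ ‖v‖²·‖w‖². Then μ{ U ∈ U(d) : |⟨v, U w⟩|² ≥ t } = ( 1 − t/(‖v‖²·‖w‖²) )^{d−1}, where μ is the Haar probability measure on the unitary group U(d). -/
open MeasureTheory Matrix

noncomputable section

/-- The squared Euclidean norm of a complex vector. -/
def normSqSum {ι : Type*} [Fintype ι] (u : ι → ℂ) : ℝ := ∑ i, ‖u i‖ ^ 2

/-- The normalised squared overlap of `u` and `x` is at least `s`. -/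
def OverlapAtLeast {ι : Type*} [Fintype ι] (s : ℝ) (u x : ι → ℂ) : Prop :=
  s * (normSqSum u * normSqSum x) ≤ ‖star u ⬝ᵥ x‖ ^ 2

section Algebra

variable {ι : Type*} [Fintype ι]

lemma normSqSum_pos {u : ι → ℂ} (hu : u ≠ 0) : 0 < normSqSum u := by
  obtain ⟨i, hi⟩ := Function.ne_iff.mp hu
  exact Finset.sum_pos' (fun _ _ => by positivity)
    ⟨i, Finset.mem_univ i, pow_pos (norm_pos_iff.mpr hi) 2⟩

lemma normSqSum_nonneg (u : ι → ℂ) : 0 ≤ normSqSum u :=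
  Finset.sum_nonneg fun _ _ => by positivity

lemma ofReal_normSqSum (u : ι → ℂ) : (normSqSum u : ℂ) = star u ⬝ᵥ u := by
  simp [normSqSum, dotProduct, Complex.conj_mul']

lemma normSqSum_smul (c : ℂ) (u : ι → ℂ) : normSqSum (c • u) = ‖c‖ ^ 2 * normSqSum u := by
  simp [normSqSum, mul_pow, Finset.mul_sum]

lemma overlapAtLeast_comm {s : ℝ} {u x : ι → ℂ} :
    OverlapAtLeast s u x ↔ OverlapAtLeast s x u := by
  have : star u ⬝ᵥ x = star (star x ⬝ᵥ u) := by
    rw [star_dotProduct]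
  rw [OverlapAtLeast, OverlapAtLeast, this, norm_star, mul_comm (normSqSum u)]

lemma overlapAtLeast_smul_left {s : ℝ} {u x : ι → ℂ} {c : ℂ} (hc : c ≠ 0) :
    OverlapAtLeast s (c • u) x ↔ OverlapAtLeast s u x := by
  have hc' : 0 < ‖c‖ ^ 2 := by positivity
  rw [OverlapAtLeast, OverlapAtLeast, normSqSum_smul, star_smul, smul_dotProduct, norm_smul,
    norm_star, mul_pow, mul_assoc, mul_left_comm, mul_le_mul_iff_right₀ hc']

variable [DecidableEq ι]

lemma star_mulVec_dotProduct (A : unitaryGroup ι ℂ) (u x : ι → ℂ) :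
    star ((A : Matrix ι ι ℂ) *ᵥ u) ⬝ᵥ x =
      star u ⬝ᵥ (((A⁻¹ : unitaryGroup ι ℂ) : Matrix ι ι ℂ) *ᵥ x) := by
  rw [star_mulVec, ← dotProduct_mulVec]; rfl

lemma inv_mulVec_mulVec (A : unitaryGroup ι ℂ) (u : ι → ℂ) :
    ((A⁻¹ : unitaryGroup ι ℂ) : Matrix ι ι ℂ) *ᵥ ((A : Matrix ι ι ℂ) *ᵥ u) = u := by
  have h : ((A⁻¹ : unitaryGroup ι ℂ) : Matrix ι ι ℂ) * A = 1 :=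
    congrArg Subtype.val (inv_mul_cancel A)
  rw [mulVec_mulVec, h, one_mulVec]

lemma normSqSum_mulVec (A : unitaryGroup ι ℂ) (u : ι → ℂ) :
    normSqSum ((A : Matrix ι ι ℂ) *ᵥ u) = normSqSum u := by
  apply Complex.ofReal_injective
  rw [ofReal_normSqSum, ofReal_normSqSum, star_mulVec_dotProduct, inv_mulVec_mulVec]

lemma overlapAtLeast_mulVec_left {s : ℝ} (A : unitaryGroup ι ℂ) {u x : ι → ℂ} :
    OverlapAtLeast s ((A : Matrix ι ι ℂ) *ᵥ u) x ↔
      OverlapAtLeast s u (((A⁻¹ : unitaryGroup ι ℂ) : Matrix ι ι ℂ) *ᵥ x) := by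
  rw [OverlapAtLeast, OverlapAtLeast, normSqSum_mulVec, normSqSum_mulVec, star_mulVec_dotProduct]

/-- Every nonzero vector is a unitary image of a nonzero multiple of a given basis vector. -/
lemma exists_unitary_smul_mulVec_single (j : ι) {u : ι → ℂ} (hu : u ≠ 0) :
    ∃ (A : unitaryGroup ι ℂ) (c : ℂ), c ≠ 0 ∧ u = c • ((A : Matrix ι ι ℂ) *ᵥ Pi.single j 1) := by
  set c : ℂ := (‖WithLp.toLp 2 u‖ : ℂ) with hc
  have hc0 : c ≠ 0 := by
    simpa [hc] using hu
  let b' : ι → EuclideanSpace ℂ ι := fun _ => c⁻¹ • WithLp.toLp 2 u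
  have hb' : Orthonormal ℂ (({j} : Set ι).domRestrict b') := by
    refine ⟨fun i => ?_, fun i k hik => absurd (Subsingleton.elim i k) hik⟩
    have : ‖WithLp.toLp 2 u‖ ≠ 0 := by simpa using hu
    simp [b', Set.domRestrict_apply, norm_smul, hc, this]
  obtain ⟨b, hb⟩ := hb'.exists_orthonormalBasis_extension_of_card_eq (by simp)
  refine ⟨⟨_, (EuclideanSpace.basisFun ι ℂ).toMatrix_orthonormalBasis_mem_unitary b⟩, c, hc0, ?_⟩
  ext i
  simp [Module.Basis.toMatrix_apply, hb j rfl, b', hc0]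

/-- A function on vectors that is invariant under unitaries and nonzero scalars is constant on
nonzero vectors. -/
lemma eq_single_of_unitary_smul_invariant {β : Type*} (f : (ι → ℂ) → β)
    (hA : ∀ (A : unitaryGroup ι ℂ) u, f ((A : Matrix ι ι ℂ) *ᵥ u) = f u)
    (hc : ∀ (c : ℂ) u, c ≠ 0 → f (c • u) = f u) (j : ι) {u : ι → ℂ} (hu : u ≠ 0) :
    f u = f (Pi.single j 1) := by
  obtain ⟨A, c, hc0, rfl⟩ := exists_unitary_smul_mulVec_single j hu
  rw [hc _ _ hc0, hA]

lemma measurePreserving_unitary_mulVec (A : unitaryGroup ι ℂ) :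
    MeasurePreserving (fun u : ι → ℂ => (A : Matrix ι ι ℂ) *ᵥ u) := by
  have hdet : ((Matrix.toLin' (A : Matrix ι ι ℂ)).restrictScalars ℝ).det = 1 := by
    have h := Matrix.det_of_mem_unitary A.2
    have h2 : ‖(A : Matrix ι ι ℂ).det‖ = 1 := CStarRing.norm_of_mem_unitary h
    rw [LinearMap.det_restrictScalars, LinearMap.det_toLin', Algebra.norm_complex_eq]
    simp [Complex.normSq_eq_norm_sq, h2]
  have h := Measure.map_linearMap_addHaar_eq_smul_addHaar (volume : Measure (ι → ℂ))
    (f := (Matrix.toLin' (A : Matrix ι ι ℂ)).restrictScalars ℝ) (by rw [hdet]; exact one_ne_zero)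
  refine ⟨by fun_prop, ?_⟩
  rw [hdet] at h
  simpa using! h

end Algebra

section Gaussian

open Set Real

lemma lintegral_Ici_mul_exp_neg_mul_sq {b r : ℝ} (hb : 0 < b) (hr : 0 ≤ r) :
    ∫⁻ x in Ici r, ENNReal.ofReal (x * exp (-b * x ^ 2)) =
      ENNReal.ofReal ((2 * b)⁻¹ * exp (-b * r ^ 2)) := by
  have hderiv : ∀ x ∈ Ici r,
      HasDerivAt (fun x => -((2 * b)⁻¹ * exp (-b * x ^ 2))) (x * exp (-b * x ^ 2)) x := by
    intro x _
    have h := ((((hasDerivAt_pow 2 x).const_mul (-b)).exp).const_mul (2 * b)⁻¹).neg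
    refine h.congr_deriv ?_
    field_simp
    simp
  have hnonneg : ∀ x ∈ Ioi r, 0 ≤ x * exp (-b * x ^ 2) := fun x hx =>
    mul_nonneg (hr.trans (le_of_lt hx)) (exp_nonneg _)
  have hlim : Filter.Tendsto (fun x => -((2 * b)⁻¹ * exp (-b * x ^ 2))) Filter.atTop (nhds 0) := by
    have h1 : Filter.Tendsto (fun x : ℝ => -b * x ^ 2) Filter.atTop Filter.atBot :=
      (Filter.tendsto_pow_atTop two_ne_zero).const_mul_atTop_of_neg (neg_lt_zero.mpr hb)
    simpa using ((tendsto_exp_atBot.comp h1).const_mul (2 * b)⁻¹).neg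
  rw [setLIntegral_congr Ioi_ae_eq_Ici.symm, ← ofReal_integral_eq_lintegral_ofReal
    (integrableOn_Ioi_deriv_of_nonneg' hderiv hnonneg hlim)
    ((ae_restrict_mem measurableSet_Ioi).mono hnonneg),
    integral_Ioi_of_hasDerivAt_of_nonneg' hderiv hnonneg hlim]
  simp

lemma lintegral_complex_gaussian_tail {a b : ℝ} (hb : 0 < b) (ha : 0 ≤ a) :
    ∫⁻ z : ℂ, {z : ℂ | a ≤ ‖z‖ ^ 2}.indicator
      (fun z => ENNReal.ofReal (exp (-b * ‖z‖ ^ 2))) z =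
      ENNReal.ofReal (π / b * exp (-b * a)) := by
  let g : ℝ → ENNReal := (Ici (√a)).indicator fun x => ENNReal.ofReal (x * exp (-b * x ^ 2))
  have hg : Measurable g := Measurable.indicator (by fun_prop) measurableSet_Ici
  have hpolar : ∀ p ∈ polarCoord.target, ENNReal.ofReal p.1 •
      ({z : ℂ | a ≤ ‖z‖ ^ 2}.indicator (fun z => ENNReal.ofReal (exp (-b * ‖z‖ ^ 2))))
        (Complex.polarCoord.symm p) = g p.1 := by
    rintro ⟨r, θ⟩ ⟨hr, -⟩
    have hr' : 0 < r := hr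
    simp only [g, indicator, mem_ofPred_eq, Complex.norm_polarCoord_symm, sq_abs, mem_Ici,
      Real.sqrt_le_left hr'.le]
    split_ifs
    · rw [smul_eq_mul, ENNReal.ofReal_mul hr'.le]
    · simp
  have hinter : (Ici (√a) ∩ Ioi 0 : Set ℝ) =ᵐ[volume] Ici (√a) := by
    have h : (Ici (√a) ∩ Ici 0 : Set ℝ) = Ici (√a) :=
      inter_eq_left.mpr (Ici_subset_Ici.mpr (sqrt_nonneg a))
    conv_rhs => rw [← h]
    exact (ae_eq_refl _).inter Ioi_ae_eq_Ici
  rw [← Complex.lintegral_comp_polarCoord_symm,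
    setLIntegral_congr_fun polarCoord.open_target.measurableSet hpolar, polarCoord_target,
    Measure.volume_eq_prod, setLIntegral_prod _ (by fun_prop)]
  simp only [lintegral_const, Measure.restrict_apply_univ, Real.volume_Ioo]
  rw [lintegral_mul_const _ hg, lintegral_indicator measurableSet_Ici,
    Measure.restrict_restrict measurableSet_Ici, setLIntegral_congr hinter,
    lintegral_Ici_mul_exp_neg_mul_sq hb (sqrt_nonneg a), sq_sqrt ha,
    ← ENNReal.ofReal_mul (by positivity)]
  congr 1
  field_simp
  ring

lemma lintegral_complex_gaussian {b : ℝ} (hb : 0 < b) :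
    ∫⁻ z : ℂ, ENNReal.ofReal (exp (-b * ‖z‖ ^ 2)) = ENNReal.ofReal (π / b) := by
  have h : {z : ℂ | 0 ≤ ‖z‖ ^ 2} = univ := eq_univ_of_forall fun z => sq_nonneg ‖z‖
  simpa [h] using lintegral_complex_gaussian_tail hb le_rfl

lemma measurable_normSqSum {ι : Type*} [Fintype ι] : Measurable (normSqSum (ι := ι)) := by
  unfold normSqSum
  fun_prop

lemma normSqSum_cons {n : ℕ} (z : ℂ) (x : Fin n → ℂ) :
    normSqSum (Fin.cons z x : Fin (n + 1) → ℂ) = ‖z‖ ^ 2 + normSqSum x := by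
  simp [normSqSum, Fin.sum_univ_succ]

lemma lintegral_fin_succ {n : ℕ} {f : (Fin (n + 1) → ℂ) → ENNReal} (hf : Measurable f) :
    ∫⁻ u, f u = ∫⁻ x : Fin n → ℂ, ∫⁻ z : ℂ, f (Fin.cons z x) := by
  have h := (volume_preserving_piFinSuccAbove (fun _ : Fin (n + 1) => ℂ) 0).symm
  rw [← h.lintegral_comp hf, Measure.volume_eq_prod,
    lintegral_prod_symm' _ (by fun_prop)]
  simp [MeasurableEquiv.piFinSuccAbove_symm_apply, Fin.insertNthEquiv]

lemma lintegral_exp_neg_mul_normSqSum {b : ℝ} (hb : 0 < b) (n : ℕ) :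
    ∫⁻ x : Fin n → ℂ, ENNReal.ofReal (exp (-b * normSqSum x)) = ENNReal.ofReal ((π / b) ^ n) := by
  induction n with
  | zero => simp [normSqSum, volume_pi]
  | succ n ih =>
    have hmeas : Measurable fun x : Fin n → ℂ => ENNReal.ofReal (exp (-b * normSqSum x)) := by
      have := measurable_normSqSum (ι := Fin n)
      fun_prop
    rw [lintegral_fin_succ (by have := measurable_normSqSum (ι := Fin (n + 1)); fun_prop)]
    simp_rw [normSqSum_cons, mul_add, exp_add, ENNReal.ofReal_mul (exp_nonneg _)]
    simp_rw [lintegral_mul_const' _ _ ENNReal.ofReal_ne_top, lintegral_complex_gaussian hb]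
    rw [lintegral_const_mul _ hmeas, ih, ← ENNReal.ofReal_mul (by positivity), pow_succ']

/-- The unnormalised standard Gaussian measure on `ℂ^ι`. -/
def complexGaussian (ι : Type*) [Fintype ι] : Measure (ι → ℂ) :=
  volume.withDensity fun u => ENNReal.ofReal (exp (-normSqSum u))

lemma measurable_gaussian_density {ι : Type*} [Fintype ι] :
    Measurable fun u : ι → ℂ => ENNReal.ofReal (exp (-normSqSum u)) := by
  have := measurable_normSqSum (ι := ι)
  fun_prop

lemma complexGaussian_univ (n : ℕ) : complexGaussian (Fin n) univ = ENNReal.ofReal (π ^ n) := by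
  simpa [complexGaussian] using lintegral_exp_neg_mul_normSqSum one_pos n

lemma measurableSet_coord_overlap {n : ℕ} (s : ℝ) :
    MeasurableSet {u : Fin (n + 1) → ℂ | s * normSqSum u ≤ ‖u 0‖ ^ 2} := by
  have := measurable_normSqSum (ι := Fin (n + 1))
  exact measurableSet_le (by fun_prop) (by fun_prop)

lemma complexGaussian_coord_overlap {n : ℕ} {s : ℝ} (hs0 : 0 ≤ s) (hs1 : s < 1) :
    complexGaussian (Fin (n + 1)) {u | s * normSqSum u ≤ ‖u 0‖ ^ 2} =
      ENNReal.ofReal (π ^ (n + 1) * (1 - s) ^ n) := by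
  have hs : 0 < 1 - s := sub_pos.mpr hs1
  rw [complexGaussian, withDensity_apply _ (measurableSet_coord_overlap s),
    ← lintegral_indicator (measurableSet_coord_overlap s),
    lintegral_fin_succ (measurable_gaussian_density.indicator (measurableSet_coord_overlap s))]
  have hinner (x : Fin n → ℂ) :
      ∫⁻ z : ℂ, {u : Fin (n + 1) → ℂ | s * normSqSum u ≤ ‖u 0‖ ^ 2}.indicator
        (fun u => ENNReal.ofReal (exp (-normSqSum u))) (Fin.cons z x) =
      ENNReal.ofReal π * ENNReal.ofReal (exp (-(1 - s)⁻¹ * normSqSum x)) := by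
    have htail := lintegral_complex_gaussian_tail one_pos
      (div_nonneg (mul_nonneg hs0 (normSqSum_nonneg x)) hs.le)
    have hpoint (z : ℂ) : {u : Fin (n + 1) → ℂ | s * normSqSum u ≤ ‖u 0‖ ^ 2}.indicator
        (fun u => ENNReal.ofReal (exp (-normSqSum u))) (Fin.cons z x) =
        {z : ℂ | s * normSqSum x / (1 - s) ≤ ‖z‖ ^ 2}.indicator
          (fun z => ENNReal.ofReal (exp (-1 * ‖z‖ ^ 2))) z *
            ENNReal.ofReal (exp (-normSqSum x)) := by
      have hiff : s * (‖z‖ ^ 2 + normSqSum x) ≤ ‖z‖ ^ 2 ↔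
          s * normSqSum x / (1 - s) ≤ ‖z‖ ^ 2 := by
        rw [div_le_iff₀ hs]
        constructor <;> intro h <;> linarith
      simp only [indicator, mem_ofPred_eq, normSqSum_cons, Fin.cons_zero, hiff]
      split_ifs
      · rw [← ENNReal.ofReal_mul (exp_nonneg _), ← exp_add]
        ring_nf
      · simp
    simp_rw [hpoint]
    rw [lintegral_mul_const' _ _ ENNReal.ofReal_ne_top, htail, ← ENNReal.ofReal_mul (by positivity),
      ← ENNReal.ofReal_mul (by positivity), div_one, mul_assoc, ← exp_add]
    congr 3
    field_simp
    ring
  simp_rw [hinner]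
  rw [lintegral_const_mul' _ _ ENNReal.ofReal_ne_top,
    lintegral_exp_neg_mul_normSqSum (inv_pos.mpr hs), ← ENNReal.ofReal_mul pi_pos.le]
  congr 1
  rw [div_inv_eq_mul, mul_pow]
  ring

lemma complexGaussian_coord_overlap_of_le {n : ℕ} {s : ℝ} (hs0 : 0 ≤ s) (hs1 : s ≤ 1) :
    complexGaussian (Fin (n + 1)) {u | s * normSqSum u ≤ ‖u 0‖ ^ 2} =
      ENNReal.ofReal (π ^ (n + 1) * (1 - s) ^ n) := by
  rcases hs1.lt_or_eq with hs1 | rfl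
  · exact complexGaussian_coord_overlap hs0 hs1
  rcases Nat.eq_zero_or_pos n with rfl | hn
  · have h : {u : Fin (0 + 1) → ℂ | 1 * normSqSum u ≤ ‖u 0‖ ^ 2} = univ := by
      ext u
      simp [normSqSum]
    rw [h, complexGaussian_univ]
    simp
  · rw [sub_self, zero_pow hn.ne', mul_zero, ENNReal.ofReal_zero, ← nonpos_iff_eq_zero]
    have hcont : Continuous fun s : ℝ => ENNReal.ofReal (π ^ (n + 1) * (1 - s) ^ n) :=
      ENNReal.continuous_ofReal.comp (by fun_prop)
    have hlim : Filter.Tendsto (fun s : ℝ => ENNReal.ofReal (π ^ (n + 1) * (1 - s) ^ n))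
        (nhdsWithin 1 (Iio 1)) (nhds 0) := by
      have h := hcont.tendsto 1
      rw [sub_self, zero_pow hn.ne', mul_zero, ENNReal.ofReal_zero] at h
      exact h.mono_left nhdsWithin_le_nhds
    refine ge_of_tendsto hlim ?_
    filter_upwards [Ioo_mem_nhdsLT (zero_lt_one (α := ℝ))] with s hs
    rw [← complexGaussian_coord_overlap hs.1.le hs.2]
    refine measure_mono fun u hu => ?_
    exact (mul_le_mul_of_nonneg_right hs.2.le (normSqSum_nonneg u)).trans hu

lemma measurePreserving_complexGaussian {ι : Type*} [Fintype ι] [DecidableEq ι]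
    (A : unitaryGroup ι ℂ) :
    MeasurePreserving (fun u : ι → ℂ => (A : Matrix ι ι ℂ) *ᵥ u)
      (complexGaussian ι) (complexGaussian ι) := by
  have h := measurePreserving_unitary_mulVec A
  refine ⟨h.measurable, Measure.ext fun S hS => ?_⟩
  rw [Measure.map_apply h.measurable hS, complexGaussian, withDensity_apply _ hS,
    withDensity_apply _ (h.measurable hS),
    ← h.setLIntegral_comp_preimage hS measurable_gaussian_density]
  simp_rw [normSqSum_mulVec]

end Gaussian

section Haar

variable {ι : Type*} [Fintype ι]

lemma measurableSet_overlapAtLeast_left (s : ℝ) (x : ι → ℂ) :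
    MeasurableSet {u : ι → ℂ | OverlapAtLeast s u x} := by
  have := measurable_normSqSum (ι := ι)
  unfold OverlapAtLeast dotProduct
  simp only [Pi.star_apply, RCLike.star_def]
  exact measurableSet_le (by fun_prop) (by fun_prop)

variable [DecidableEq ι]

lemma measurable_unitary_mulVec (w : ι → ℂ) :
    Measurable fun U : unitaryGroup ι ℂ => (U : Matrix ι ι ℂ) *ᵥ w := by
  refine measurable_pi_lambda _ fun i => ?_
  refine Finset.measurable_sum _ fun j _ => Measurable.mul_const ?_ _
  exact ((measurable_pi_apply j).comp (measurable_pi_apply i)).comp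
    (measurable_subtype_coe : Measurable fun U : unitaryGroup ι ℂ => (U : Matrix ι ι ℂ))

lemma measurable_unitary_mul_left (A : unitaryGroup ι ℂ) :
    Measurable fun U : unitaryGroup ι ℂ => A * U := by
  refine Measurable.subtype_mk (measurable_pi_lambda _ fun i => measurable_pi_lambda _ fun k => ?_)
  refine Finset.measurable_sum _ fun j _ => Measurable.const_mul ?_ _
  exact ((measurable_pi_apply k).comp (measurable_pi_apply j)).comp
    (measurable_subtype_coe : Measurable fun U : unitaryGroup ι ℂ => (U : Matrix ι ι ℂ))

lemma measurableSet_overlapAtLeast_prod (s : ℝ) (w : ι → ℂ) :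
    MeasurableSet {p : (ι → ℂ) × unitaryGroup ι ℂ |
      OverlapAtLeast s p.1 ((p.2 : Matrix ι ι ℂ) *ᵥ w)} := by
  have := measurable_normSqSum (ι := ι)
  have hU := measurable_unitary_mulVec w
  unfold OverlapAtLeast dotProduct
  simp only [Pi.star_apply, RCLike.star_def, normSqSum_mulVec]
  refine measurableSet_le (by fun_prop) ?_
  have hUi (i : ι) : Measurable fun p : (ι → ℂ) × unitaryGroup ι ℂ =>
      ((p.2 : Matrix ι ι ℂ) *ᵥ w) i := (measurable_pi_apply i).comp (hU.comp measurable_snd)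
  fun_prop

/-- The Gaussian measure of a double cone around `x` does not depend on `x ≠ 0`. -/
lemma complexGaussian_overlapAtLeast (s : ℝ) (j : ι) {x : ι → ℂ} (hx : x ≠ 0) :
    complexGaussian ι {u | OverlapAtLeast s u x} =
      complexGaussian ι {u | s * normSqSum u ≤ ‖u j‖ ^ 2} := by
  rw [eq_single_of_unitary_smul_invariant
    (fun x => complexGaussian ι {u | OverlapAtLeast s u x}) ?_ ?_ j hx]
  · congr 1
    ext u
    simp [OverlapAtLeast, normSqSum, Pi.single_apply, apply_ite]
  · intro A x
    have h := measurePreserving_complexGaussian A⁻¹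
    rw [← h.measure_preimage (measurableSet_overlapAtLeast_left s x).nullMeasurableSet]
    simp only [Set.preimage_ofPred_eq, overlapAtLeast_mulVec_left, inv_inv]
  · intro c x hc
    simp only [overlapAtLeast_comm (x := c • x), overlapAtLeast_smul_left hc,
      overlapAtLeast_comm (u := x)]

variable (μ : Measure (unitaryGroup ι ℂ)) [μ.IsMulLeftInvariant]

/-- The Haar measure of the overlap event does not depend on the reference vector. -/
lemma haar_overlapAtLeast_eq (s : ℝ) (w : ι → ℂ) (j : ι) {v : ι → ℂ} (hv : v ≠ 0) :
    μ {U | OverlapAtLeast s v ((U : Matrix ι ι ℂ) *ᵥ w)} =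
      μ {U | OverlapAtLeast s (Pi.single j 1) ((U : Matrix ι ι ℂ) *ᵥ w)} := by
  refine eq_single_of_unitary_smul_invariant
    (fun v => μ {U | OverlapAtLeast s v ((U : Matrix ι ι ℂ) *ᵥ w)}) ?_ ?_ j hv
  · intro A v
    have hS : MeasurableSet
        {U : unitaryGroup ι ℂ | OverlapAtLeast s v ((U : Matrix ι ι ℂ) *ᵥ w)} :=
      measurable_prodMk_left (measurableSet_overlapAtLeast_prod s w)
    rw [← map_mul_left_eq_self μ A⁻¹, Measure.map_apply (measurable_unitary_mul_left A⁻¹) hS,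
      map_mul_left_eq_self μ A⁻¹]
    simp only [Set.preimage_ofPred_eq, overlapAtLeast_mulVec_left, mulVec_mulVec]
    rfl
  · intro c v hc
    simp only [overlapAtLeast_smul_left hc]

lemma haar_overlapAtLeast_mul_complexGaussian [IsProbabilityMeasure μ] (s : ℝ) (j : ι)
    {v w : ι → ℂ} (hv : v ≠ 0) (hw : w ≠ 0) :
    μ {U | OverlapAtLeast s v ((U : Matrix ι ι ℂ) *ᵥ w)} * complexGaussian ι Set.univ =
      complexGaussian ι {u | s * normSqSum u ≤ ‖u j‖ ^ 2} := by
  have : Nonempty ι := ⟨j⟩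
  have : SFinite (complexGaussian ι) := by unfold complexGaussian; infer_instance
  have hS := measurableSet_overlapAtLeast_prod s w
  have h1 := Measure.prod_apply (μ := complexGaussian ι) (ν := μ) hS
  have h2 := Measure.prod_apply_symm (μ := complexGaussian ι) (ν := μ) hS
  have hU (U : unitaryGroup ι ℂ) : (U : Matrix ι ι ℂ) *ᵥ w ≠ 0 := fun h => hw <| by
    rw [← inv_mulVec_mulVec U w, h, mulVec_zero]
  have hne : ∀ᵐ u ∂complexGaussian ι, u ≠ 0 :=
    (withDensity_absolutelyContinuous _ _).ae_le (Measure.ae_ne volume 0)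
  simp only [Set.preimage_ofPred_eq, complexGaussian_overlapAtLeast s j (hU _), lintegral_const,
    measure_univ, mul_one] at h2
  rw [← h2, h1, ← lintegral_const]
  refine lintegral_congr_ae (hne.mono fun u hu => ?_)
  simp only [Set.preimage_ofPred_eq]
  rw [haar_overlapAtLeast_eq μ s w j hv, haar_overlapAtLeast_eq μ s w j hu]

end Haar

/-- Exact overlap distribution for a Haar-random unitary: for nonzero `v, w ∈ ℂ^d` and
`0 ≤ t ≤ ‖v‖²·‖w‖²`, `μ{U : |⟨v, Uw⟩|² ≥ t} = (1 − t/(‖v‖²·‖w‖²))^{d−1}`. -/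
theorem overlap_distribution (d : ℕ) (hd : 1 ≤ d)
    (v w : Fin d → ℂ) (hv : v ≠ 0) (hw : w ≠ 0)
    (μ : Measure (Matrix.unitaryGroup (Fin d) ℂ))
    (hμprob : IsProbabilityMeasure μ) (hμinv : μ.IsMulLeftInvariant)
    (t : ℝ) (ht0 : 0 ≤ t)
    (ht1 : t ≤ (∑ i, ‖v i‖ ^ 2) * (∑ i, ‖w i‖ ^ 2)) :
    μ {U | t ≤ ‖∑ i, (starRingEnd ℂ) (v i) *
        Matrix.mulVec (U : Matrix (Fin d) (Fin d) ℂ) w i‖ ^ 2} =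
      ENNReal.ofReal
        ((1 - t / ((∑ i, ‖v i‖ ^ 2) * (∑ i, ‖w i‖ ^ 2))) ^ (d - 1)) := by
  obtain ⟨n, rfl⟩ : ∃ n, d = n + 1 := ⟨d - 1, by omega⟩
  change t ≤ normSqSum v * normSqSum w at ht1
  change _ = ENNReal.ofReal ((1 - t / (normSqSum v * normSqSum w)) ^ n)
  have hpos : 0 < normSqSum v * normSqSum w := mul_pos (normSqSum_pos hv) (normSqSum_pos hw)
  set s := t / (normSqSum v * normSqSum w) with hs
  have hs0 : 0 ≤ s := div_nonneg ht0 hpos.le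
  have hs1 : s ≤ 1 := (div_le_one hpos).mpr ht1
  have hpi : (0 : ℝ) < Real.pi ^ (n + 1) := by positivity
  have hset : {U : unitaryGroup (Fin (n + 1)) ℂ | t ≤ ‖∑ i, (starRingEnd ℂ) (v i) *
      Matrix.mulVec (U : Matrix (Fin (n + 1)) (Fin (n + 1)) ℂ) w i‖ ^ 2} =
      {U : unitaryGroup (Fin (n + 1)) ℂ |
        OverlapAtLeast s v ((U : Matrix (Fin (n + 1)) (Fin (n + 1)) ℂ) *ᵥ w)} := by
    ext U
    rw [Set.mem_ofPred_eq, Set.mem_ofPred_eq, OverlapAtLeast, normSqSum_mulVec, hs,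
      div_mul_cancel₀ _ hpos.ne']
    rfl
  have h := haar_overlapAtLeast_mul_complexGaussian μ s 0 hv hw
  rw [complexGaussian_univ, complexGaussian_coord_overlap_of_le hs0 hs1,
    mul_comm (Real.pi ^ _), ENNReal.ofReal_mul (pow_nonneg (sub_nonneg.mpr hs1) n)] at h
  rw [hset]
  exact (ENNReal.mul_left_inj (ENNReal.ofReal_pos.mpr hpi).ne' ENNReal.ofReal_ne_top).mp h

end
end
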